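/- arXiv:2101.04986 — 2 statements merged into one kernel-verified Lean document; each statement's English description precedes it below -/
import Mathlib

section
/- Let X₁, X₂ be compact metric spaces, let C : X₁ × 𝒫(X₂) → (−∞,+∞] be lower semi-continuous, bounded from below, with C(x₁,·) convex on 𝒫(X₂) for every x₁ ∈ X₁, let F₁, F₂ be admissible entropy functions with (F₁)'_∞ + (F₂)'_∞ + inf C > 0, and let μ₁ ∈ ℳ(X₁), μ₂ ∈ ℳ(X₂). If the weak optimal entropy transport problem is feasible, i.e. there exists γ ∈ ℳ(X₁×X₂) with ℰ_C(γ|μ₁,μ₂) < ∞, then ℰ_C(μ₁,μ₂) = sup_{(φ₁,φ₂)∈Λ} Σ_{i=1}^2 ∫_{X_i} F_i°(φ_i) dμ_i. -/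
open MeasureTheory Filter Set Topology
open scoped ENNReal NNReal BoundedContinuousFunction

noncomputable section

/-- The "positive part" of an extended real number, as an element of `ℝ≥0∞`. -/
def posE (a : EReal) : ℝ≥0∞ := if a = ⊤ then ⊤ else ENNReal.ofReal a.toReal

/-- Integral of an `EReal`-valued function: positive part minus negative part
(in `EReal`, so that it is always defined). -/
def eIntegral {α : Type*} [MeasurableSpace α] (μ : Measure α) (f : α → EReal) : EReal :=
  ((∫⁻ x, posE (f x) ∂μ : ℝ≥0∞) : EReal) - ((∫⁻ x, posE (-(f x)) ∂μ : ℝ≥0∞) : EReal)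

/-- The recession constant `lim_{s→∞} G(s)/s` (as a `limsup`, which coincides with the
limit for convex functions). -/
def recessionOf (G : ℝ → ℝ≥0∞) : ℝ≥0∞ :=
  Filter.limsup (fun s : ℝ => G s / ENNReal.ofReal s) Filter.atTop

/-- An admissible entropy function: a convex, lower semicontinuous function
`F : [0,∞) → [0,∞]` which is finite at some positive point. -/
structure EntropyFn where
  F : ℝ → ℝ≥0∞
  convex' : ∀ a ∈ Ici (0:ℝ), ∀ b ∈ Ici (0:ℝ), ∀ t : ℝ, 0 ≤ t → t ≤ 1 →
    F (t * a + (1 - t) * b) ≤ ENNReal.ofReal t * F a + ENNReal.ofReal (1 - t) * F b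
  lsc : LowerSemicontinuousOn F (Ici (0:ℝ))
  dom : ∃ s : ℝ, 0 < s ∧ F s ≠ ∞

namespace EntropyFn

/-- The recession constant `F'_∞ = lim_{s→∞} F(s)/s`. -/
def recC (F : EntropyFn) : ℝ≥0∞ := recessionOf F.F

/-- `F` is superlinear if `F'_∞ = ∞`. -/
def Superlinear (F : EntropyFn) : Prop := F.recC = ∞

/-- `F°(φ) := inf_{s ≥ 0} (φ·s + F(s))`, extended to `EReal` arguments. -/
def circ (F : EntropyFn) (φ : EReal) : EReal :=
  ⨅ s : Ici (0:ℝ), φ * ((s : ℝ) : EReal) + ((F.F (s : ℝ) : ℝ≥0∞) : EReal)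

/-- The (interior of the) domain of `F°` is taken inside the set where `F°` is not `-∞`. -/
def circDom (F : EntropyFn) : Set ℝ := {φ : ℝ | F.circ (φ : EReal) ≠ ⊥}

/-- The reverse entropy function `R(r) = r·F(1/r)` for `r > 0`, with `R(0) = F'_∞`. -/
def revF (F : EntropyFn) (r : ℝ) : ℝ≥0∞ :=
  if 0 < r then ENNReal.ofReal r * F.F (1 / r) else F.recC

/-- The Legendre conjugate `R*(ψ) = sup_{s ≥ 0} (s·ψ − R(s))` of the reverse function. -/
def revConj (F : EntropyFn) (ψ : ℝ) : EReal :=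
  ⨆ s : Ici (0:ℝ), (((s : ℝ) * ψ : ℝ) : EReal) - ((F.revF (s : ℝ) : ℝ≥0∞) : EReal)

end EntropyFn

/-- The entropy functional `ℱ(γ|μ) = ∫ F(dγ/dμ) dμ + F'_∞ · γ^⊥(X)`, where
`γ = (dγ/dμ)·μ + γ^⊥` is the Lebesgue decomposition of `γ` with respect to `μ`. -/
def entF {X : Type*} [MeasurableSpace X] (F : EntropyFn) (γ μ : Measure X) : ℝ≥0∞ :=
  (∫⁻ x, F.F ((γ.rnDeriv μ x).toReal) ∂μ) + F.recC * (γ.singularPart μ) Set.univ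

/-- The reverse entropy functional `ℛ(μ|γ) = ∫ R(dμ/dγ) dγ + R'_∞ · μ^⊥(X)`. -/
def revEntF {X : Type*} [MeasurableSpace X] (F : EntropyFn) (μ γ : Measure X) : ℝ≥0∞ :=
  (∫⁻ x, F.revF ((μ.rnDeriv γ x).toReal) ∂γ) + recessionOf F.revF * (μ.singularPart γ) Set.univ

section WOET

variable {X₁ X₂ : Type*} [MeasurableSpace X₁] [MeasurableSpace X₂]

/-- The weak entropy-transport cost
`ℰ_C(γ|μ₁,μ₂) = ℱ₁(γ₁|μ₁) + ℱ₂(γ₂|μ₂) + ∫ C(x₁, γ_{x₁}) dγ₁(x₁)`. -/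
def wCost [StandardBorelSpace X₂] [Nonempty X₂]
    (C : X₁ → ProbabilityMeasure X₂ → EReal) (F₁ F₂ : EntropyFn)
    (μ₁ : Measure X₁) (μ₂ : Measure X₂)
    (γ : Measure (X₁ × X₂)) (hγ : IsFiniteMeasure γ) : EReal :=
  haveI := hγ
  ((entF F₁ γ.fst μ₁ : ℝ≥0∞) : EReal) + ((entF F₂ γ.snd μ₂ : ℝ≥0∞) : EReal) +
    eIntegral γ.fst (fun x₁ => C x₁ ⟨γ.condKernel x₁, inferInstance⟩)

/-- The weak optimal entropy-transport value `ℰ_C(μ₁,μ₂)`. -/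
def wOpt [StandardBorelSpace X₂] [Nonempty X₂]
    (C : X₁ → ProbabilityMeasure X₂ → EReal) (F₁ F₂ : EntropyFn)
    (μ₁ : Measure X₁) (μ₂ : Measure X₂) : EReal :=
  sInf { e : EReal | ∃ (γ : Measure (X₁ × X₂)) (hγ : IsFiniteMeasure γ),
    e = wCost C F₁ F₂ μ₁ μ₂ γ hγ }

variable [TopologicalSpace X₁] [TopologicalSpace X₂]

/-- The dual feasible set `Λ`. -/
def lamSet (C : X₁ → ProbabilityMeasure X₂ → EReal) (F₁ F₂ : EntropyFn) :
    Set ((X₁ →ᵇ ℝ) × (X₂ →ᵇ ℝ)) :=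
  { φ | (∀ x, φ.1 x ∈ interior F₁.circDom) ∧ (∀ x, φ.2 x ∈ interior F₂.circDom) ∧
      ∀ (x₁ : X₁) (p : ProbabilityMeasure X₂),
        ((φ.1 x₁ + ∫ x₂, φ.2 x₂ ∂(p : Measure X₂) : ℝ) : EReal) ≤ C x₁ p }

/-- The dual feasible set `Λ_R`. -/
def lamRSet (C : X₁ → ProbabilityMeasure X₂ → EReal) (F₁ F₂ : EntropyFn) :
    Set ((X₁ →ᵇ ℝ) × (X₂ →ᵇ ℝ)) :=
  { φ | (∃ b : ℝ, ((b : ℝ) : EReal) < ((F₁.F 0 : ℝ≥0∞) : EReal) ∧ ∀ x, φ.1 x ≤ b) ∧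
        (∃ b : ℝ, ((b : ℝ) : EReal) < ((F₂.F 0 : ℝ≥0∞) : EReal) ∧ ∀ x, φ.2 x ≤ b) ∧
        ∀ (x₁ : X₁) (p : ProbabilityMeasure X₂),
          F₁.revConj (φ.1 x₁) + eIntegral (p : Measure X₂) (fun x₂ => F₂.revConj (φ.2 x₂))
            ≤ C x₁ p }

/-- The dual feasible set `Λ_ET` (constraints tested against all pairs of nonnegative finite
measures; on all other signed measures `ET = +∞`, so those constraints are vacuous). -/
def lamETSet [StandardBorelSpace X₂] [Nonempty X₂]
    (C : X₁ → ProbabilityMeasure X₂ → EReal) (F₁ F₂ : EntropyFn) :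
    Set ((X₁ →ᵇ ℝ) × (X₂ →ᵇ ℝ)) :=
  { φ | ∀ (μ₁ : Measure X₁) (μ₂ : Measure X₂), IsFiniteMeasure μ₁ → IsFiniteMeasure μ₂ →
      (((∫ x, φ.1 x ∂μ₁) + ∫ x, φ.2 x ∂μ₂ : ℝ) : EReal) ≤ wOpt C F₁ F₂ μ₁ μ₂ }

/-- The set `Λ_ET^<`. -/
def lamETltSet [StandardBorelSpace X₂] [Nonempty X₂]
    (C : X₁ → ProbabilityMeasure X₂ → EReal) (F₁ F₂ : EntropyFn) :
    Set ((X₁ →ᵇ ℝ) × (X₂ →ᵇ ℝ)) :=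
  { φ ∈ lamETSet C F₁ F₂ |
      (∃ b : ℝ, ((b : ℝ) : EReal) < ((F₁.F 0 : ℝ≥0∞) : EReal) ∧ ∀ x, φ.1 x ≤ b) ∧
      (∃ b : ℝ, ((b : ℝ) : EReal) < ((F₂.F 0 : ℝ≥0∞) : EReal) ∧ ∀ x, φ.2 x ≤ b) }

/-- `R_C φ(x₁) := inf_{p ∈ 𝒫(X₂)} (C(x₁,p) + ∫ φ dp)`. -/
def RCfun (C : X₁ → ProbabilityMeasure X₂ → EReal) (φ : X₂ →ᵇ ℝ) (x₁ : X₁) : EReal :=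
  ⨅ p : ProbabilityMeasure X₂, C x₁ p + ((∫ x₂, φ x₂ ∂(p : Measure X₂) : ℝ) : EReal)

/-- Property (BM) of an admissible entropy function on a space `X`. -/
def HasBM (X : Type*) [TopologicalSpace X] [MeasurableSpace X] (F : EntropyFn) : Prop :=
  ∀ ψ : X →ᵇ ℝ, (∃ b : ℝ, ((b : ℝ) : EReal) < ((F.F 0 : ℝ≥0∞) : EReal) ∧ ∀ x, ψ x ≤ b) →
    ∃ s : X → ℝ, Measurable s ∧ (∃ M : ℝ, ∀ x, |s x| ≤ M) ∧ (∀ x, 0 < s x) ∧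
      ∀ x, ((F.revF (s x) : ℝ≥0∞) : EReal) + F.revConj (ψ x) = ((s x * ψ x : ℝ) : EReal)

end WOET

/-- The functional `ET` extended to pairs of finite signed measures:
it equals `ℰ_C(μ₁,μ₂)` when both arguments are (induced by) nonnegative finite measures,
and `+∞` otherwise. -/
def ETsgn {X₁ X₂ : Type*} [MeasurableSpace X₁] [MeasurableSpace X₂]
    [StandardBorelSpace X₂] [Nonempty X₂]
    (C : X₁ → ProbabilityMeasure X₂ → EReal) (F₁ F₂ : EntropyFn)
    (ν₁ : SignedMeasure X₁) (ν₂ : SignedMeasure X₂) : EReal :=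
  sInf { e : EReal | ∃ (μ₁ : Measure X₁) (h₁ : IsFiniteMeasure μ₁)
      (μ₂ : Measure X₂) (h₂ : IsFiniteMeasure μ₂),
      ν₁ = @Measure.toSignedMeasure X₁ _ μ₁ h₁ ∧ ν₂ = @Measure.toSignedMeasure X₂ _ μ₂ h₂ ∧
      e = wOpt C F₁ F₂ μ₁ μ₂ }

section Martingale

variable {X : Set ℝ}

/-- The martingale condition for a finite measure on `X × X`:
`∫ y dγ_x(y) = x` for `γ₁`-a.e. `x`. -/
def martCond [StandardBorelSpace ↥X] [Nonempty ↥X]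
    (γ : Measure (↥X × ↥X)) (hγ : IsFiniteMeasure γ) : Prop :=
  haveI := hγ
  ∀ᵐ x ∂γ.fst, (∫ y, (y : ℝ) ∂(γ.condKernel x)) = (x : ℝ)

/-- The martingale optimal entropy transport value `ℰ_M(μ₁,μ₂)` (with an `EReal`-valued
cost `c`). -/
def eMart [StandardBorelSpace ↥X] [Nonempty ↥X]
    (c : ↥X → ↥X → EReal) (F₁ F₂ : EntropyFn) (μ₁ μ₂ : Measure ↥X) : EReal :=
  sInf { e : EReal | ∃ (γ : Measure (↥X × ↥X)) (hγ : IsFiniteMeasure γ), martCond γ hγ ∧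
    e = ((entF F₁ γ.fst μ₁ : ℝ≥0∞) : EReal) + ((entF F₂ γ.snd μ₂ : ℝ≥0∞) : EReal) +
        eIntegral γ (fun q => c q.1 q.2) }

/-- The martingale optimal entropy transport value `ℰ_M(μ₁,μ₂)` (with a `[0,∞]`-valued
cost `c`). -/
def eMartNN [StandardBorelSpace ↥X] [Nonempty ↥X]
    (c : ↥X → ↥X → ℝ≥0∞) (F₁ F₂ : EntropyFn) (μ₁ μ₂ : Measure ↥X) : EReal :=
  sInf { e : EReal | ∃ (γ : Measure (↥X × ↥X)) (hγ : IsFiniteMeasure γ), martCond γ hγ ∧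
    e = ((entF F₁ γ.fst μ₁ + entF F₂ γ.snd μ₂ + ∫⁻ q, c q.1 q.2 ∂γ : ℝ≥0∞) : EReal) }

/-- The dual feasible set `Λ_M` for the martingale problem. -/
def lamM (c : ↥X → ↥X → EReal) (F₁ F₂ : EntropyFn) : Set ((↥X →ᵇ ℝ) × (↥X →ᵇ ℝ)) :=
  { φ | (∀ x, φ.1 x ∈ interior F₁.circDom) ∧ (∀ x, φ.2 x ∈ interior F₂.circDom) ∧
      ∃ h : ↥X →ᵇ ℝ, ∀ x₁ x₂ : ↥X,
        ((φ.1 x₁ + φ.2 x₂ + h x₁ * ((x₂ : ℝ) - (x₁ : ℝ)) : ℝ) : EReal) ≤ c x₁ x₂ }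

/-- The perspective function `r·F(θ/r)` with the convention `r·F(θ/r) = θ·F'_∞` for `r = 0`. -/
def perspFn (F : EntropyFn) (r θ : ℝ) : ℝ≥0∞ :=
  if r = 0 then ENNReal.ofReal θ * F.recC else ENNReal.ofReal r * F.F (θ / r)

/-- The homogeneous marginal perspective cost `H(x₁,r₁;x₂,r₂)` (the dependence on
`(x₁,x₂)` is through the value `c = c(x₁,x₂)`). -/
def Hcost (F₁ F₂ : EntropyFn) (c : ℝ≥0∞) (r₁ r₂ : ℝ) : ℝ≥0∞ :=
  if c ≠ ∞ then
    ⨅ θ : Ioi (0:ℝ), perspFn F₁ r₁ (θ : ℝ) + perspFn F₂ r₂ (θ : ℝ) + ENNReal.ofReal (θ : ℝ) * c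
  else F₁.F 0 * ENNReal.ofReal r₁ + F₂.F 0 * ENNReal.ofReal r₂

/-- The functional `ℋ(μ₁,μ₂|γ)`. -/
def hMargFun (F₁ F₂ : EntropyFn) (c : ↥X → ↥X → ℝ≥0∞) (μ₁ μ₂ : Measure ↥X)
    (γ : Measure (↥X × ↥X)) : ℝ≥0∞ :=
  (∫⁻ q, Hcost F₁ F₂ (c q.1 q.2) ((μ₁.rnDeriv γ.fst q.1).toReal)
      ((μ₂.rnDeriv γ.snd q.2).toReal) ∂γ)
    + F₁.F 0 * (μ₁.singularPart γ.fst) Set.univ + F₂.F 0 * (μ₂.singularPart γ.snd) Set.univ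

/-- The functional `ℛ(μ₁,μ₂|γ)`. -/
def rMargFun (F₁ F₂ : EntropyFn) (c : ↥X → ↥X → ℝ≥0∞) (μ₁ μ₂ : Measure ↥X)
    (γ : Measure (↥X × ↥X)) : ℝ≥0∞ :=
  revEntF F₁ μ₁ γ.fst + revEntF F₂ μ₂ γ.snd + ∫⁻ q, c q.1 q.2 ∂γ

/-- The first `p`-homogeneous marginal of a measure on `Y × Y`, `Y = X × [0,∞)`. -/
def hMarg1 (p : ℝ) (α : Measure ((↥X × ℝ≥0) × (↥X × ℝ≥0))) : Measure ↥X :=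
  Measure.map (fun q => q.1.1) (α.withDensity fun q => (q.1.2 : ℝ≥0∞) ^ p)

/-- The second `p`-homogeneous marginal of a measure on `Y × Y`, `Y = X × [0,∞)`. -/
def hMarg2 (p : ℝ) (α : Measure ((↥X × ℝ≥0) × (↥X × ℝ≥0))) : Measure ↥X :=
  Measure.map (fun q => q.2.1) (α.withDensity fun q => (q.2.2 : ℝ≥0∞) ^ p)

/-- Membership in the homogeneous constraint set `ℋ^p_{M,≤}(μ₁,μ₂)`. -/
def memHpM (p : ℝ) (μ₁ μ₂ : Measure ↥X) (α : Measure ((↥X × ℝ≥0) × (↥X × ℝ≥0))) : Prop :=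
  IsFiniteMeasure α ∧ (∫⁻ q, (q.1.2 : ℝ≥0∞) ^ p + (q.2.2 : ℝ≥0∞) ^ p ∂α) ≠ ∞ ∧
    hMarg1 p α ≤ μ₁ ∧ hMarg2 p α ≤ μ₂ ∧
    ∀ h : ↥X →ᵇ ℝ, (∫ q, h q.1.1 * ((q.2.1 : ℝ) - (q.1.1 : ℝ)) ∂α) = 0

end Martingale

/-
Both the entropies and the transport cost of a plan `γ` are suprema of affine functionals of `γ`:
`F(f) = sup_φ (F°(φ) - φ f)`, and by Hahn-Banach in `𝒫(Y)` the cost `C x p` is the supremum of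
`∫ f(x, ·) dp` over the continuous minorants `f` of `C`. In both cases the supremum may be taken
out of the integral, because it runs over a family of continuous functions that is stable under
convex combinations with continuous weights. Weak duality is then immediate. For the converse, let
`c` be a finite upper bound of the dual problem. The coercivity assumption says precisely that
constant potentials and a constant minorant satisfy the constraint `φ₁ ⊕ φ₂ < f` strictly, so that
Hahn-Banach and the Riesz representation theorem provide a Lagrange multiplier for it: a measure `γ`
with `∫ (f - φ₁ ⊕ φ₂) dγ + ∫ F₁°(φ₁) dμ₁ + ∫ F₂°(φ₂) dμ₂ ≤ c` for all admissible `f`, `φ₁`, `φ₂`.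
Taking the supremum over these, the cost of `γ` is at most `c`.
-/

section Separation

variable {E : Type*} [AddCommGroup E] [Module ℝ E] [TopologicalSpace E] [IsTopologicalAddGroup E]
  [ContinuousSMul ℝ E] [LocallyConvexSpace ℝ E]

lemma exists_separating_functional_of_upwardClosed {A : Set (E × ℝ)} (hclosed : IsClosed A)
    (hconv : Convex ℝ A) (hup : ∀ z ∈ A, ∀ r, z.2 ≤ r → (z.1, r) ∈ A) (hne : A.Nonempty)
    {x : E} {c : ℝ} (hxc : (x, c) ∉ A) :
    ∃ (ℓ : E →L[ℝ] ℝ) (β u : ℝ), 0 ≤ β ∧ ℓ x + β * c < u ∧ ∀ z ∈ A, u < ℓ z.1 + β * z.2 := by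
  obtain ⟨f, u, hfx, hfA⟩ := geometric_hahn_banach_point_closed hconv hclosed hxc
  have hf (y : E) (r : ℝ) : f (y, r) = f (y, 0) + f (0, 1) * r := by
    rw [mul_comm, ← smul_eq_mul, ← map_smul, ← map_add]
    simp
  refine ⟨f.comp (ContinuousLinearMap.inl ℝ E ℝ), f (0, 1), u, ?_, ?_, fun z hz => ?_⟩
  · obtain ⟨z, hz⟩ := hne
    by_contra! hβ
    set t := (f z - u) / -f (0, 1)
    have ht_nonneg : 0 ≤ t := div_nonneg (sub_nonneg.2 (hfA z hz).le) (by linarith)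
    have hzt := hfA _ (hup z hz (z.2 + t) (by linarith))
    have htβ : t * -f (0, 1) = f z - u := div_mul_cancel₀ _ (neg_pos.2 hβ).ne'
    rw [hf, mul_add, ← add_assoc, ← hf] at hzt
    linarith
  · simpa [← hf] using hfx
  · simpa [← hf] using hfA z hz

lemma exists_affine_minorant_of_notMem {A : Set (E × ℝ)} (hclosed : IsClosed A)
    (hconv : Convex ℝ A) (hup : ∀ z ∈ A, ∀ r, z.2 ≤ r → (z.1, r) ∈ A) {K : ℝ}
    (hK : ∀ z ∈ A, K ≤ z.2) {x : E} {c : ℝ} (hxc : (x, c) ∉ A) :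
    ∃ (ℓ : E →L[ℝ] ℝ) (b : ℝ), c < ℓ x + b ∧ ∀ z ∈ A, ℓ z.1 + b ≤ z.2 := by
  rcases A.eq_empty_or_nonempty with rfl | hne
  · exact ⟨0, c + 1, by simp, by simp⟩
  obtain ⟨ℓ, β, u, hβ, hx, hA⟩ :=
    exists_separating_functional_of_upwardClosed hclosed hconv hup hne hxc
  rcases hβ.eq_or_lt with rfl | hβ
  · -- A vertical hyperplane: add a large multiple of it to the constant minorant `K`.
    simp only [zero_mul, add_zero] at hx hA
    obtain ⟨k, hk⟩ := exists_nat_gt ((c - K) / (u - ℓ x))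
    rw [div_lt_iff₀ (sub_pos.2 hx)] at hk
    refine ⟨-(k : ℝ) • ℓ, k * u + K, ?_, fun z hz => ?_⟩ <;>
      simp only [smul_apply, smul_eq_mul, neg_mul]
    · linarith
    have : (k : ℝ) * u ≤ k * ℓ z.1 := by gcongr; exact (hA z hz).le
    have := hK z hz
    linarith
  · refine ⟨-β⁻¹ • ℓ, β⁻¹ * u, ?_, fun z hz => ?_⟩
    · have : 0 < β⁻¹ * (u - (ℓ x + β * c)) := mul_pos (inv_pos.2 hβ) (by linarith)
      simp only [mul_sub, mul_add, inv_mul_cancel_left₀ hβ.ne'] at this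
      simp only [smul_apply, smul_eq_mul, neg_mul]
      linarith
    · have : 0 ≤ β⁻¹ * (ℓ z.1 + β * z.2 - u) :=
        mul_nonneg (inv_nonneg.2 hβ.le) (by linarith [hA z hz])
      simp only [mul_sub, mul_add, inv_mul_cancel_left₀ hβ.ne'] at this
      simp only [smul_apply, smul_eq_mul, neg_mul]
      linarith

end Separation

namespace EntropyFn

variable (F : EntropyFn)

/-- The real-valued version of `F°` on its domain; outside `F.circDom`, where `F° = -∞`, it takes
the junk value `0`. -/
def circReal (q : ℝ) : ℝ := (F.circ q).toReal

variable {F} {q q' s c : ℝ}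

lemma coe_le_circ_iff :
    (c : EReal) ≤ F.circ q ↔ ∀ s, 0 ≤ s → F.F s ≠ ∞ → c ≤ q * s + (F.F s).toReal := by
  rw [circ, le_iInf_iff]
  refine ⟨fun h s hs hFs => ?_, fun h s => ?_⟩
  · have := h ⟨s, hs⟩
    rw [← EReal.coe_ennreal_toReal hFs] at this
    exact_mod_cast this
  · by_cases hFs : F.F s = ∞
    · rw [hFs, EReal.coe_ennreal_top, ← EReal.coe_mul, EReal.coe_add_top]
      exact le_top
    · rw [← EReal.coe_ennreal_toReal hFs]
      exact_mod_cast h s s.2 hFs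

lemma circ_ne_top : F.circ q ≠ ⊤ := by
  obtain ⟨s, hs, hFs⟩ := F.dom
  intro h
  have hle : ((q * s + (F.F s).toReal + 1 : ℝ) : EReal) ≤ F.circ q := h ▸ le_top
  have := coe_le_circ_iff.1 hle s hs.le hFs
  linarith

lemma coe_circReal (hq : q ∈ F.circDom) : (F.circReal q : EReal) = F.circ q :=
  EReal.coe_toReal circ_ne_top hq

lemma circReal_le (hq : q ∈ F.circDom) (hs : 0 ≤ s) (hFs : F.F s ≠ ∞) :
    F.circReal q ≤ q * s + (F.F s).toReal :=
  coe_le_circ_iff.1 (coe_circReal hq).le s hs hFs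

lemma mem_circDom_of_forall_le (h : ∀ s, 0 ≤ s → F.F s ≠ ∞ → c ≤ q * s + (F.F s).toReal) :
    q ∈ F.circDom := fun hbot =>
  absurd (coe_le_circ_iff.2 h) (by simp [hbot])

lemma le_circReal (h : ∀ s, 0 ≤ s → F.F s ≠ ∞ → c ≤ q * s + (F.F s).toReal) :
    c ≤ F.circReal q := by
  have := coe_le_circ_iff.2 h
  rw [← coe_circReal (mem_circDom_of_forall_le h)] at this
  exact_mod_cast this

lemma circReal_le_add_of_le (hq : q ∈ F.circDom) (hqq' : q ≤ q') (hs : 0 ≤ s) (hFs : F.F s ≠ ∞) :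
    F.circReal q ≤ q' * s + (F.F s).toReal :=
  (circReal_le hq hs hFs).trans (by gcongr)

lemma mem_circDom_of_le (hq : q ∈ F.circDom) (hqq' : q ≤ q') : q' ∈ F.circDom :=
  mem_circDom_of_forall_le fun _ => circReal_le_add_of_le hq hqq'

lemma circReal_mono (hq : q ∈ F.circDom) (hqq' : q ≤ q') : F.circReal q ≤ F.circReal q' :=
  le_circReal fun _ => circReal_le_add_of_le hq hqq'

lemma mem_interior_circDom_of_lt (hq : q ∈ F.circDom) (hqq' : q < q') :
    q' ∈ interior F.circDom :=
  mem_interior.2 ⟨Ioi q, fun _ hr => mem_circDom_of_le hq hr.le, isOpen_Ioi, hqq'⟩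

lemma mem_interior_circDom_of_pos (hq : 0 < q) : q ∈ interior F.circDom :=
  mem_interior_circDom_of_lt
    (mem_circDom_of_forall_le (c := 0) fun s _ _ => by simp) hq

lemma concaveOn_circReal : ConcaveOn ℝ F.circDom F.circReal := by
  have key {p : ℝ} (hp : p ∈ F.circDom) {q : ℝ} (hq : q ∈ F.circDom) {t u : ℝ} (ht : 0 ≤ t)
      (hu : 0 ≤ u) (htu : t + u = 1) (s : ℝ) (hs : 0 ≤ s) (hFs : F.F s ≠ ∞) :
      t * F.circReal p + u * F.circReal q ≤ (t * p + u * q) * s + (F.F s).toReal := by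
    calc t * F.circReal p + u * F.circReal q
        ≤ t * (p * s + (F.F s).toReal) + u * (q * s + (F.F s).toReal) := by
          gcongr <;> apply circReal_le <;> assumption
      _ = (t * p + u * q) * s + (t + u) * (F.F s).toReal := by ring
      _ = (t * p + u * q) * s + (F.F s).toReal := by rw [htu, one_mul]
  exact ⟨fun p hp q hq t u ht hu htu => mem_circDom_of_forall_le (key hp hq ht hu htu),
    fun p hp q hq t u ht hu htu => le_circReal (key hp hq ht hu htu)⟩

lemma continuousOn_circReal : ContinuousOn F.circReal (interior F.circDom) :=
  (concaveOn_circReal.subset interior_subset concaveOn_circReal.1.interior).continuousOn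
    isOpen_interior

variable (F) in
/-- The epigraph of the entropy function `F : [0,∞) → [0,∞]`, as a subset of `ℝ × ℝ`. -/
def epigraph : Set (ℝ × ℝ) := {z | 0 ≤ z.1 ∧ F.F z.1 ≠ ∞ ∧ (F.F z.1).toReal ≤ z.2}

lemma isClosed_epigraph : IsClosed F.epigraph := by
  have h := (lowerSemicontinuousOn_iff_isClosed_epigraph isClosed_Ici).1 F.lsc
  convert (h.preimage (f := fun z : ℝ × ℝ => (z.1, ENNReal.ofReal z.2))
    (continuous_fst.prodMk (ENNReal.continuous_ofReal.comp continuous_snd))).inter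
    (isClosed_le continuous_const continuous_snd : IsClosed {z : ℝ × ℝ | 0 ≤ z.2}) using 1
  ext ⟨s, r⟩
  constructor
  · rintro ⟨hs, hFs, hr⟩
    have hr0 : 0 ≤ r := ENNReal.toReal_nonneg.trans hr
    exact ⟨⟨hs, (ENNReal.le_ofReal_iff_toReal_le hFs hr0).2 hr⟩, hr0⟩
  · rintro ⟨⟨hs, hr⟩, hr0⟩
    exact ⟨hs, ne_top_of_le_ne_top ENNReal.ofReal_ne_top hr, ENNReal.toReal_le_of_le_ofReal hr0 hr⟩

lemma convex_epigraph : Convex ℝ F.epigraph := by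
  rintro ⟨a, r⟩ ⟨ha, hFa, hr⟩ ⟨b, r'⟩ ⟨hb, hFb, hr'⟩ t u ht hu htu
  obtain rfl : u = 1 - t := by linarith
  have hconv := F.convex' a ha b hb t ht (by linarith)
  have htop : ENNReal.ofReal t * F.F a + ENNReal.ofReal (1 - t) * F.F b ≠ ∞ := by finiteness
  refine ⟨add_nonneg (mul_nonneg ht ha) (mul_nonneg hu hb), ne_top_of_le_ne_top htop hconv, ?_⟩
  calc (F.F (t * a + (1 - t) * b)).toReal
      ≤ (ENNReal.ofReal t * F.F a + ENNReal.ofReal (1 - t) * F.F b).toReal :=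
        ENNReal.toReal_mono htop hconv
    _ = t * (F.F a).toReal + (1 - t) * (F.F b).toReal := by
        rw [ENNReal.toReal_add (by finiteness) (by finiteness), ENNReal.toReal_mul,
          ENNReal.toReal_mul, ENNReal.toReal_ofReal ht, ENNReal.toReal_ofReal hu]
    _ ≤ t * r + (1 - t) * r' := by gcongr

lemma exists_mem_circDom_lt (hc : (c : EReal) < F.F s) :
    ∃ q ∈ F.circDom, c < F.circReal q - q * s := by
  have hnotMem : (s, c) ∉ F.epigraph := by
    rintro ⟨-, hFs, hle⟩
    rw [← EReal.coe_ennreal_toReal hFs] at hc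
    exact hc.not_ge (mod_cast hle)
  obtain ⟨ℓ, b, hlt, hle⟩ := exists_affine_minorant_of_notMem isClosed_epigraph convex_epigraph
    (fun z hz r hr => ⟨hz.1, hz.2.1, hz.2.2.trans hr⟩)
    (fun z hz => ENNReal.toReal_nonneg.trans hz.2.2) hnotMem
  have hℓ (r : ℝ) : ℓ r = ℓ 1 * r := by
    rw [mul_comm, ← smul_eq_mul, ← map_smul, smul_eq_mul, mul_one]
  have hb (r : ℝ) (hr : 0 ≤ r) (hFr : F.F r ≠ ∞) : b ≤ -ℓ 1 * r + (F.F r).toReal := by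
    have := hle (r, (F.F r).toReal) ⟨hr, hFr, le_rfl⟩
    rw [hℓ] at this
    linarith
  refine ⟨-ℓ 1, mem_circDom_of_forall_le hb, ?_⟩
  rw [hℓ] at hlt
  linarith [le_circReal hb]

lemma exists_rat_mem_interior_circDom_lt (hc : (c : EReal) < F.F s) :
    ∃ q : ℚ, (q : ℝ) ∈ interior F.circDom ∧ c < F.circReal q - q * s := by
  obtain ⟨p, hp, hcp⟩ := exists_mem_circDom_lt hc
  have hev : ∀ᶠ r in 𝓝 p, c < F.circReal p - r * s := by
    have : ContinuousAt (fun r => F.circReal p - r * s) p := by fun_prop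
    exact this.eventually (lt_mem_nhds hcp)
  obtain ⟨u, hu, hsub⟩ := exists_Ico_subset_of_mem_nhds hev ⟨p + 1, by simp⟩
  obtain ⟨q, hpq, hqu⟩ := exists_rat_btwn hu
  have hcq : c < F.circReal p - q * s := hsub ⟨hpq.le, hqu⟩
  exact ⟨q, mem_interior_circDom_of_lt hp hpq,
    hcq.trans_le (sub_le_sub_right (circReal_mono hp hpq.le) _)⟩

lemma neg_le_recC (hq : q ∈ F.circDom) : ((-q : ℝ) : EReal) ≤ F.recC := by
  have hlim : Tendsto (fun s : ℝ => ENNReal.ofReal (F.circReal q / s - q)) atTop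
      (𝓝 (ENNReal.ofReal (-q))) := by
    apply ENNReal.tendsto_ofReal
    simpa using (tendsto_const_nhds.div_atTop tendsto_id).sub_const q
  have hle : ∀ᶠ s : ℝ in atTop,
      ENNReal.ofReal (F.circReal q / s - q) ≤ F.F s / ENNReal.ofReal s := by
    filter_upwards [eventually_gt_atTop 0] with s hs
    rw [ENNReal.le_div_iff_mul_le (by simp [hs]) (by simp), ← ENNReal.ofReal_mul' hs.le]
    by_cases hFs : F.F s = ∞
    · simp [hFs]
    · apply ENNReal.ofReal_le_of_le_toReal
      rw [sub_mul, div_mul_cancel₀ _ hs.ne']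
      linarith [circReal_le hq hs.le hFs]
  have hrec : ENNReal.ofReal (-q) ≤ F.recC := by
    rw [recC, recessionOf, ← hlim.limsup_eq]
    exact limsup_le_limsup hle
  calc ((-q : ℝ) : EReal) ≤ (ENNReal.ofReal (-q) : EReal) := by
        rw [EReal.coe_ennreal_ofReal]; exact_mod_cast le_max_left _ _
    _ ≤ F.recC := mod_cast hrec

lemma frequently_mul_lt (hc : 0 ≤ c) (h : (c : EReal) < F.recC) :
    ∃ᶠ s : ℝ in atTop, ((c * s : ℝ) : EReal) < F.F s := by
  have h' : ENNReal.ofReal c < F.recC := by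
    rw [← EReal.coe_ennreal_lt_coe_ennreal_iff, EReal.coe_ennreal_ofReal, max_eq_left hc]
    exact h
  refine ((frequently_lt_of_lt_limsup (by isBoundedDefault) h').and_eventually
    (eventually_gt_atTop 0)).mono fun s ⟨hlt, hs⟩ => ?_
  rw [ENNReal.lt_div_iff_mul_lt (by simp [hs]) (by simp), ← ENNReal.ofReal_mul hc,
    ← EReal.coe_ennreal_lt_coe_ennreal_iff, EReal.coe_ennreal_ofReal,
    max_eq_left (mul_nonneg hc hs.le)] at hlt
  exact hlt

lemma mem_interior_circDom_of_neg_lt_recC (h : ((-q : ℝ) : EReal) < F.recC) :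
    q ∈ interior F.circDom := by
  rcases lt_or_ge 0 q with hq | hq
  · exact mem_interior_circDom_of_pos hq
  obtain ⟨s₀, hs₀, hFs₀⟩ := F.dom
  obtain ⟨r, hqr, hr⟩ := EReal.lt_iff_exists_real_btwn.1 h
  have hqr : -q < r := mod_cast hqr
  obtain ⟨s, hFs, hs₀s, hs⟩ := ((frequently_mul_lt (by linarith) hr).and_eventually
    ((eventually_gt_atTop s₀).and
      (eventually_ge_atTop (((F.F s₀).toReal + q * s₀) / (r + q))))).exists
  rw [div_le_iff₀ (by linarith)] at hs
  obtain ⟨p, hp, hsp⟩ := exists_mem_circDom_lt hFs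
  have hps₀ := circReal_le hp hs₀.le hFs₀
  -- `p` is below the slope `((F s₀) - r s) / (s - s₀)`, which is at most `q` for large `s`.
  have hpq : p * (s - s₀) < q * (s - s₀) := by linarith
  exact mem_interior_circDom_of_lt hp (lt_of_mul_lt_mul_right hpq (sub_pos.2 hs₀s).le)

lemma iSup_rat_circReal_sub (hs : 0 ≤ s) :
    ⨆ q : {q : ℚ // (q : ℝ) ∈ interior F.circDom}, ((F.circReal q - q * s : ℝ) : EReal)
      = F.F s := by
  refine le_antisymm (iSup_le fun ⟨q, hq⟩ => ?_) (le_of_forall_lt fun c hc => ?_)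
  · by_cases hFs : F.F s = ∞
    · simp [hFs]
    · rw [← EReal.coe_ennreal_toReal hFs, EReal.coe_le_coe_iff]
      linarith [circReal_le (interior_subset hq) hs hFs]
  · obtain ⟨r, hcr, hr⟩ := EReal.lt_iff_exists_real_btwn.1 hc
    obtain ⟨q, hq, hrq⟩ := exists_rat_mem_interior_circDom_lt hr
    exact hcr.trans (lt_iSup_iff.2 ⟨⟨q, hq⟩, mod_cast hrq⟩)

lemma iSup_rat_neg :
    ⨆ q : {q : ℚ // (q : ℝ) ∈ interior F.circDom}, ((-q : ℝ) : EReal) = F.recC := by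
  refine le_antisymm (iSup_le fun q => neg_le_recC (interior_subset q.2))
    (le_of_forall_lt fun c hc => ?_)
  obtain ⟨r, hcr, hr⟩ := EReal.lt_iff_exists_rat_btwn.1 hc
  refine lt_iSup_iff.2 ⟨⟨-r, mem_interior_circDom_of_neg_lt_recC ?_⟩, ?_⟩ <;> simpa

end EntropyFn

section EIntegral

variable {α : Type*} [MeasurableSpace α] {μ : Measure α}

lemma posE_eq_toENNReal (a : EReal) : posE a = a.toENNReal := rfl

lemma posE_coe (a : ℝ) : posE a = ENNReal.ofReal a := by simp [posE_eq_toENNReal]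

lemma posE_mono : Monotone posE := fun _ _ => EReal.toENNReal_le_toENNReal

lemma continuous_posE : Continuous posE := EReal.continuous_toENNReal

lemma eIntegral_mono {f g : α → EReal} (h : ∀ x, f x ≤ g x) : eIntegral μ f ≤ eIntegral μ g := by
  apply EReal.sub_le_sub
  · exact_mod_cast lintegral_mono fun x => posE_mono (h x)
  · exact_mod_cast lintegral_mono fun x => posE_mono (EReal.neg_le_neg_iff.2 (h x))

lemma eIntegral_coe {f : α → ℝ} (hf : Integrable f μ) :
    eIntegral μ (fun x => (f x : EReal)) = ((∫ x, f x ∂μ : ℝ) : EReal) := by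
  simp only [eIntegral, ← EReal.coe_neg, posE_coe]
  rw [integral_eq_lintegral_pos_part_sub_lintegral_neg_part hf, EReal.coe_sub,
    EReal.coe_ennreal_toReal hf.lintegral_lt_top.ne,
    EReal.coe_ennreal_toReal (by exact hf.neg.lintegral_lt_top.ne)]

lemma eIntegral_coe_ennreal (f : α → ℝ≥0∞) :
    eIntegral μ (fun x => (f x : EReal)) = ((∫⁻ x, f x ∂μ : ℝ≥0∞) : EReal) := by
  have hneg (x : α) : posE (-(f x : EReal)) = 0 :=
    EReal.toENNReal_of_nonpos (by simp [EReal.coe_ennreal_nonneg])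
  simp [eIntegral, hneg, posE_eq_toENNReal]

lemma tendsto_integral_eIntegral_iSup {f : ℕ → α → ℝ} (hf : ∀ n, Integrable (f n) μ)
    (hmono : Monotone f) :
    Tendsto (fun n => ((∫ x, f n x ∂μ : ℝ) : EReal)) atTop
      (𝓝 (eIntegral μ fun x => ⨆ n, (f n x : EReal))) := by
  have hlim (x : α) : Tendsto (fun n => (f n x : EReal)) atTop (𝓝 (⨆ n, (f n x : EReal))) :=
    tendsto_atTop_iSup fun _ _ hmn => EReal.coe_le_coe_iff.2 (hmono hmn x)
  have hpos : Tendsto (fun n => ∫⁻ x, posE (f n x) ∂μ) atTop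
      (𝓝 (∫⁻ x, posE (⨆ n, (f n x : EReal)) ∂μ)) := by
    refine lintegral_tendsto_of_tendsto_of_monotone (fun n => ?_)
      (.of_forall fun x _ _ hmn => posE_mono (EReal.coe_le_coe_iff.2 (hmono hmn x)))
      (.of_forall fun x => (continuous_posE.tendsto _).comp (hlim x))
    exact continuous_posE.measurable.comp_aemeasurable (hf n).aemeasurable.coe_real_ereal
  have hneg₀ : ∫⁻ x, posE (-(f 0 x : EReal)) ∂μ ≠ ∞ := by
    simp only [← EReal.coe_neg, posE_coe]
    exact (hf 0).neg.lintegral_lt_top.ne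
  have hneg_le (g : α → EReal) (hg : ∀ x, f 0 x ≤ g x) (x : α) :
      posE (-(g x)) ≤ posE (-(f 0 x : EReal)) :=
    posE_mono (EReal.neg_le_neg_iff.2 (hg x))
  have hneg : Tendsto (fun n => ∫⁻ x, posE (-(f n x : EReal)) ∂μ) atTop
      (𝓝 (∫⁻ x, posE (-(⨆ n, (f n x : EReal))) ∂μ)) := by
    refine tendsto_lintegral_of_dominated_convergence' _ (fun n => ?_)
      (fun n => .of_forall (hneg_le _ fun x => EReal.coe_le_coe_iff.2 (hmono n.zero_le x))) hneg₀
      (.of_forall fun x =>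
        (continuous_posE.tendsto _).comp ((continuous_neg.tendsto _).comp (hlim x)))
    exact (continuous_posE.comp continuous_neg).measurable.comp_aemeasurable
      (hf n).aemeasurable.coe_real_ereal
  have hneg_top : ∫⁻ x, posE (-(⨆ n, (f n x : EReal))) ∂μ ≠ ∞ :=
    ne_top_of_le_ne_top hneg₀
      (lintegral_mono (hneg_le _ fun x => le_iSup (fun n => (f n x : EReal)) 0))
  simp only [← eIntegral_coe (hf _), eIntegral, sub_eq_add_neg]
  refine (EReal.continuousAt_add (p := (_, _)) (.inr ?_) (.inl ?_)).tendsto.comp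
    (((continuous_coe_ennreal_ereal.tendsto _).comp hpos).prodMk_nhds
      ((continuous_neg.tendsto _).comp ((continuous_coe_ennreal_ereal.tendsto _).comp hneg)))
  · simpa using hneg_top
  · simp

end EIntegral

section Selection

variable {X : Type*} [TopologicalSpace X] {ι : Type*}

/-- A family of functions on `X` is decomposable if it is stable, up to enlarging the function,
under pointwise convex combinations with continuous weights. Sup and integral may be interchanged
for such families (`exists_lt_integral_of_lt_eIntegral_iSup`). -/
def IsDecomposable (g : ι → X → ℝ) : Prop :=
  ∀ i j, ∀ θ : C(X, ℝ), (∀ x, θ x ∈ Icc 0 1) →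
    ∃ k, ∀ x, θ x * g i x + (1 - θ x) * g j x ≤ g k x

variable [TopologicalSpace.PseudoMetrizableSpace X] [MeasurableSpace X] [BorelSpace X]
  {m : Measure X}

lemma exists_continuous_lintegral_posPart_sub_mul_le {w : X → ℝ} (hw : Integrable w m) {ε : ℝ≥0∞}
    (hε : ε ≠ 0) :
    ∃ θ : C(X, ℝ), (∀ x, θ x ∈ Icc 0 1) ∧
      ∫⁻ x, ENNReal.ofReal (max (w x) 0 - θ x * w x) ∂m ≤ ε := by
  set ν := m.withDensity fun x => ‖w x‖ₑ
  set B : Set X := {x | 0 ≤ w x}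
  have : IsFiniteMeasure ν := isFiniteMeasure_withDensity hw.2.ne
  have hB : NullMeasurableSet B ν :=
    (nullMeasurableSet_le aemeasurable_const hw.aemeasurable).mono_ac
      (withDensity_absolutelyContinuous _ _)
  -- Approximate the indicator of `{w ≥ 0}` by a continuous function, with respect to `|w| m`.
  obtain ⟨k, hk, -⟩ := ((integrable_const (1 : ℝ)).indicator₀ hB
    ).exists_boundedContinuous_lintegral_sub_le hε
  simp only [← Pi.sub_apply] at hk
  rw [lintegral_withDensity_eq_lintegral_mul₀' hw.aemeasurable.enorm
    (((aemeasurable_const.indicator₀ hB).sub k.continuous.measurable.aemeasurable).enorm)] at hk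
  refine ⟨⟨fun x => max 0 (min 1 (k x)), by fun_prop⟩,
    fun x => ⟨le_max_left _ _, max_le zero_le_one (min_le_left _ _)⟩,
    (lintegral_mono fun x => ?_).trans hk⟩
  rw [Pi.mul_apply, ← enorm_mul, ← ofReal_norm, norm_mul, Real.norm_eq_abs,
    Real.norm_eq_abs]
  refine ENNReal.ofReal_le_ofReal ?_
  simp only [ContinuousMap.coe_mk, Pi.sub_apply]
  by_cases hx : 0 ≤ w x
  · rw [indicator_of_mem (show x ∈ B from hx), max_eq_left hx, ← one_sub_mul, mul_comm,
      abs_of_nonneg hx]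
    gcongr
    grind
  · rw [indicator_of_notMem (show x ∉ B from hx), max_eq_right (not_le.1 hx).le,
      abs_of_neg (not_le.1 hx), zero_sub, ← mul_neg, mul_comm]
    have := neg_nonneg.2 (not_le.1 hx).le
    gcongr
    grind

lemma integrable_partialSups {α : Type*} [MeasurableSpace α] {μ : Measure α} {f : ℕ → α → ℝ}
    (hf : ∀ n, Integrable (f n) μ) (n : ℕ) : Integrable (partialSups f n) μ := by
  induction n with
  | zero => exact hf 0
  | succ n ih => rw [partialSups_add_one]; exact ih.sup (hf (n + 1))

lemma iSup_coe_partialSups {α : Type*} (f : ℕ → α → ℝ) (x : α) :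
    ⨆ n, (partialSups f n x : EReal) = ⨆ n, (f n x : EReal) := by
  refine le_antisymm (iSup_le fun n => ?_)
    (iSup_mono fun n => EReal.coe_le_coe_iff.2 (le_partialSups f n x))
  obtain ⟨k, -, hk⟩ := exists_partialSups_eq (f · x) n
  rw [Pi.partialSups_apply, hk]
  exact le_iSup (fun n => (f n x : EReal)) k

lemma IsDecomposable.exists_lintegral_partialSups_sub_le {g : ι → X → ℝ} (hg : IsDecomposable g)
    (hint : ∀ i, Integrable (g i) m) (e : ℕ → ι) (n : ℕ) {ε : ℝ≥0∞} (hε : ε ≠ 0) :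
    ∃ i, ∫⁻ x, ENNReal.ofReal (partialSups (g ∘ e) n x - g i x) ∂m ≤ ε := by
  induction n generalizing ε with
  | zero => exact ⟨e 0, by simp⟩
  | succ n ih =>
    obtain ⟨i, hi⟩ := ih (ENNReal.half_pos hε).ne'
    obtain ⟨θ, hθ, hθε⟩ := exists_continuous_lintegral_posPart_sub_mul_le
      ((hint i).sub (hint (e (n + 1)))) (ENNReal.half_pos hε).ne'
    obtain ⟨k, hk⟩ := hg i (e (n + 1)) θ hθ
    refine ⟨k, ?_⟩
    have hle (x : X) : partialSups (g ∘ e) (n + 1) x - g k x ≤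
        max (partialSups (g ∘ e) n x - g i x) 0 +
          (max ((g i - g (e (n + 1))) x) 0 - θ x * (g i - g (e (n + 1))) x) := by
      have := hk x
      rw [partialSups_add_one]
      simp only [Pi.sup_apply, Pi.sub_apply, Function.comp_apply]
      grind
    calc ∫⁻ x, ENNReal.ofReal (partialSups (g ∘ e) (n + 1) x - g k x) ∂m
        ≤ ∫⁻ x, ENNReal.ofReal (partialSups (g ∘ e) n x - g i x) +
            ENNReal.ofReal (max ((g i - g (e (n + 1))) x) 0
              - θ x * (g i - g (e (n + 1))) x) ∂m := by
          refine lintegral_mono fun x => (ENNReal.ofReal_le_ofReal (hle x)).trans ?_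
          refine ENNReal.ofReal_add_le.trans_eq ?_
          simp
      _ ≤ ε / 2 + ε / 2 := by
          rw [lintegral_add_left']
          · exact add_le_add hi hθε
          · have hsup := integrable_partialSups (fun n => hint (e n)) n
            exact (hsup.sub (hint i)).aemeasurable.ennreal_ofReal
      _ = ε := ENNReal.add_halves ε

lemma IsDecomposable.exists_lt_integral_of_lt_eIntegral_iSup {κ : Type*} [Countable κ] [Nonempty κ]
    {g : ι → X → ℝ} (hg : IsDecomposable g) (hint : ∀ i, Integrable (g i) m) (e : κ → ι) {c : ℝ}
    (hc : (c : EReal) < eIntegral m fun x => ⨆ k, (g (e k) x : EReal)) :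
    ∃ i, c < ∫ x, g i x ∂m := by
  obtain ⟨u, hu⟩ := exists_surjective_nat κ
  have hsup : ∀ n, Integrable (partialSups (g ∘ e ∘ u) n) m :=
    integrable_partialSups fun n => hint (e (u n))
  have hiSup (x : X) :
      ⨆ n, (partialSups (g ∘ e ∘ u) n x : EReal) = ⨆ k, (g (e k) x : EReal) :=
    (iSup_coe_partialSups (g ∘ e ∘ u) x).trans (hu.iSup_comp fun k => (g (e k) x : EReal))
  have hlim := tendsto_integral_eIntegral_iSup hsup (partialSups (g ∘ e ∘ u)).monotone
  simp only [hiSup] at hlim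
  obtain ⟨n, hn⟩ := (hlim.eventually (lt_mem_nhds hc)).exists
  have hn : c < ∫ x, partialSups (g ∘ e ∘ u) n x ∂m := mod_cast hn
  obtain ⟨δ, hδ, hcδ⟩ : ∃ δ > 0, c < ∫ x, partialSups (g ∘ e ∘ u) n x ∂m - δ :=
    ⟨(∫ x, partialSups (g ∘ e ∘ u) n x ∂m - c) / 2, by linarith, by linarith⟩
  obtain ⟨i, hi⟩ := hg.exists_lintegral_partialSups_sub_le hint (e ∘ u) n
    (ENNReal.ofReal_pos.2 hδ).ne'
  refine ⟨i, ?_⟩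
  have hle : ∫ x, (partialSups (g ∘ e ∘ u) n - g i) x ∂m ≤ δ := by
    rw [integral_eq_lintegral_pos_part_sub_lintegral_neg_part ((hsup n).sub (hint i))]
    exact (sub_le_self _ ENNReal.toReal_nonneg).trans
      (ENNReal.toReal_le_of_le_ofReal hδ.le hi)
  rw [integral_sub' (hsup n) (hint i)] at hle
  linarith

end Selection

section EntropyDuality

namespace EntropyFn

/-- The admissible dual variables for `F`: the continuous functions with values in the interior of
the domain of `F°`. -/
def potentials (F : EntropyFn) (X : Type*) [TopologicalSpace X] : Set C(X, ℝ) :=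
  {φ | ∀ x, φ x ∈ interior F.circDom}

open Classical in
/-- The integrand `F°(φ) - φ f` of the dual form of the entropy of a measure of density `f`, whose
singular part is carried by `S`; on `S` it is replaced by its recession `-φ`. -/
def dualIntegrand {X : Type*} (F : EntropyFn) (S : Set X) (f φ : X → ℝ) : X → ℝ :=
  fun x => if x ∈ S then -φ x else F.circReal (φ x) - φ x * f x

open Classical in
/-- The integrand `F(f)` of the entropy of a measure of density `f`, whose singular part is carried
by `S`; on `S` it is replaced by its recession constant. -/
def entropyIntegrand {X : Type*} (F : EntropyFn) (S : Set X) (f : X → ℝ) : X → ℝ≥0∞ :=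
  fun x => if x ∈ S then F.recC else F.F (f x)

variable {F : EntropyFn} {X : Type*} {S : Set X} {f : X → ℝ}

lemma dualIntegrand_le_entropyIntegrand {φ : X → ℝ} {x : X} (hφ : φ x ∈ F.circDom)
    (hf : 0 ≤ f x) : (F.dualIntegrand S f φ x : EReal) ≤ F.entropyIntegrand S f x := by
  unfold dualIntegrand entropyIntegrand
  split_ifs with hx
  · exact neg_le_recC hφ
  · by_cases hF : F.F (f x) = ∞
    · simp [hF]
    · rw [← EReal.coe_ennreal_toReal hF, EReal.coe_le_coe_iff]
      linarith [circReal_le hφ hf hF]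

lemma iSup_rat_dualIntegrand {x : X} (hf : 0 ≤ f x) :
    ⨆ q : {q : ℚ // (q : ℝ) ∈ interior F.circDom},
      (F.dualIntegrand S f (fun _ => ((q : ℚ) : ℝ)) x : EReal) = F.entropyIntegrand S f x := by
  unfold dualIntegrand entropyIntegrand
  split_ifs with hx
  · exact iSup_rat_neg
  · exact iSup_rat_circReal_sub hf

variable [TopologicalSpace X]

lemma continuous_circReal_comp {φ : C(X, ℝ)} (hφ : φ ∈ F.potentials X) :
    Continuous fun x => F.circReal (φ x) :=
  continuousOn_circReal.comp_continuous φ.continuous hφ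

lemma isDecomposable_dualIntegrand :
    IsDecomposable fun φ : F.potentials X => F.dualIntegrand S f φ := by
  rintro ⟨φ, hφ⟩ ⟨ψ, hψ⟩ θ hθ
  have hθ' (x : X) : 0 ≤ 1 - θ x := sub_nonneg.2 (hθ x).2
  refine ⟨⟨θ * φ + (1 - θ) * ψ, fun x => ?_⟩, fun x => ?_⟩
  · exact concaveOn_circReal.1.interior (hφ x) (hψ x) (hθ x).1 (hθ' x) (by simp)
  · have hconc := concaveOn_circReal.2 (interior_subset (hφ x)) (interior_subset (hψ x))
      (hθ x).1 (hθ' x) (by ring)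
    simp only [smul_eq_mul] at hconc
    simp only [dualIntegrand, ContinuousMap.add_apply, ContinuousMap.mul_apply,
      ContinuousMap.sub_apply, ContinuousMap.one_apply]
    split_ifs <;> linarith

end EntropyFn

variable {X : Type*} [MeasurableSpace X] {γ μ : Measure X} {S : Set X}

lemma exists_ae_notMem_ae_singularPart_mem (γ μ : Measure X) :
    ∃ S : Set X, (∀ᵐ x ∂μ, x ∉ S) ∧ ∀ᵐ x ∂γ.singularPart μ, x ∈ S := by
  obtain ⟨T, -, hγT, hμT⟩ := Measure.mutuallySingular_singularPart γ μ
  exact ⟨Tᶜ, measure_eq_zero_iff_ae_notMem.1 hμT,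
    (measure_eq_zero_iff_ae_notMem.1 hγT).mono fun _ => id⟩

lemma eIntegral_entropyIntegrand (F : EntropyFn) (hμ : ∀ᵐ x ∂μ, x ∉ S)
    (hγ : ∀ᵐ x ∂γ.singularPart μ, x ∈ S) :
    eIntegral (μ + γ.singularPart μ)
      (fun x => F.entropyIntegrand S (fun x => (γ.rnDeriv μ x).toReal) x) = entF F γ μ := by
  rw [eIntegral_coe_ennreal, lintegral_add_measure, entF, ← lintegral_const]
  congr 2
  · exact lintegral_congr_ae (hμ.mono fun x hx => if_neg hx)
  · exact lintegral_congr_ae (hγ.mono fun x hx => if_pos hx)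

lemma integral_eq_integral_singularPart_add_integral_rnDeriv_mul [SigmaFinite μ] [SigmaFinite γ]
    {φ : X → ℝ} (hφ : Integrable φ γ) :
    ∫ x, φ x ∂γ = ∫ x, φ x ∂γ.singularPart μ + ∫ x, φ x * (γ.rnDeriv μ x).toReal ∂μ := by
  have hle := Measure.haveLebesgueDecomposition_add γ μ
  conv_lhs => rw [hle]
  rw [hle] at hφ
  rw [integral_add_measure hφ.left_of_add_measure hφ.right_of_add_measure,
    integral_withDensity_eq_integral_toReal_smul (Measure.measurable_rnDeriv _ _)
      (Measure.rnDeriv_lt_top γ μ)]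
  simp only [smul_eq_mul, mul_comm]

variable [TopologicalSpace X] [CompactSpace X] [BorelSpace X] [IsFiniteMeasure γ]
  [IsFiniteMeasure μ] {F : EntropyFn} {φ : C(X, ℝ)}

lemma integrable_of_continuous {f : X → ℝ} (hf : Continuous f) : Integrable f μ :=
  (BoundedContinuousFunction.mkOfCompact ⟨f, hf⟩).integrable μ

lemma integrable_dualIntegrand_and_integral_eq (hμ : ∀ᵐ x ∂μ, x ∉ S)
    (hγ : ∀ᵐ x ∂γ.singularPart μ, x ∈ S) (hφ : φ ∈ F.potentials X) :
    Integrable (F.dualIntegrand S (fun x => (γ.rnDeriv μ x).toReal) φ) (μ + γ.singularPart μ) ∧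
      ∫ x, F.dualIntegrand S (fun x => (γ.rnDeriv μ x).toReal) φ x ∂(μ + γ.singularPart μ) =
        ∫ x, F.circReal (φ x) ∂μ - ∫ x, φ x ∂γ := by
  have hμ_eq : F.dualIntegrand S (fun x => (γ.rnDeriv μ x).toReal) φ =ᵐ[μ]
      fun x => F.circReal (φ x) - φ x * (γ.rnDeriv μ x).toReal :=
    hμ.mono fun x hx => if_neg hx
  have hγ_eq : F.dualIntegrand S (fun x => (γ.rnDeriv μ x).toReal) φ =ᵐ[γ.singularPart μ]
      fun x => -φ x :=
    hγ.mono fun x hx => if_pos hx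
  have hcirc : Integrable (fun x => F.circReal (φ x)) μ :=
    integrable_of_continuous (EntropyFn.continuous_circReal_comp hφ)
  have hmul : Integrable (fun x => φ x * (γ.rnDeriv μ x).toReal) μ :=
    Measure.integrable_toReal_rnDeriv.bdd_mul φ.continuous.measurable.aestronglyMeasurable
      (.of_forall φ.norm_coe_le_norm)
  have hintμ := (hcirc.sub hmul).congr hμ_eq.symm
  have hintγ := (integrable_of_continuous φ.continuous).neg.congr hγ_eq.symm
  refine ⟨hintμ.add_measure hintγ, ?_⟩
  rw [integral_add_measure hintμ hintγ, integral_congr_ae hμ_eq, integral_congr_ae hγ_eq,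
    integral_sub hcirc hmul, integral_neg,
    integral_eq_integral_singularPart_add_integral_rnDeriv_mul (γ := γ) (μ := μ)
      (integrable_of_continuous φ.continuous)]
  ring

lemma integral_circReal_sub_le_entF (hφ : φ ∈ F.potentials X) :
    ((∫ x, F.circReal (φ x) ∂μ - ∫ x, φ x ∂γ : ℝ) : EReal) ≤ entF F γ μ := by
  obtain ⟨S, hμ, hγ⟩ := exists_ae_notMem_ae_singularPart_mem γ μ
  obtain ⟨hint, heq⟩ := integrable_dualIntegrand_and_integral_eq hμ hγ hφ
  rw [← heq, ← eIntegral_coe hint, ← eIntegral_entropyIntegrand F hμ hγ]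
  exact eIntegral_mono fun x =>
    EntropyFn.dualIntegrand_le_entropyIntegrand (interior_subset (hφ x)) ENNReal.toReal_nonneg

lemma exists_lt_integral_circReal_sub_of_lt_entF [TopologicalSpace.PseudoMetrizableSpace X]
    {c : ℝ} (hc : (c : EReal) < entF F γ μ) :
    ∃ φ ∈ F.potentials X, c < ∫ x, F.circReal (φ x) ∂μ - ∫ x, φ x ∂γ := by
  obtain ⟨S, hμ, hγ⟩ := exists_ae_notMem_ae_singularPart_mem γ μ
  have : Nonempty {q : ℚ // (q : ℝ) ∈ interior F.circDom} :=
    ⟨1, EntropyFn.mem_interior_circDom_of_pos (by simp)⟩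
  rw [← eIntegral_entropyIntegrand F hμ hγ, ← funext fun x =>
    EntropyFn.iSup_rat_dualIntegrand (x := x) (ENNReal.toReal_nonneg (a := γ.rnDeriv μ x))] at hc
  obtain ⟨φ, hφ⟩ := EntropyFn.isDecomposable_dualIntegrand.exists_lt_integral_of_lt_eIntegral_iSup
    (fun φ => (integrable_dualIntegrand_and_integral_eq hμ hγ φ.2).1)
    (fun q : {q : ℚ // (q : ℝ) ∈ interior F.circDom} => ⟨.const X (q : ℚ), fun _ => q.2⟩) hc
  rw [(integrable_dualIntegrand_and_integral_eq hμ hγ φ.2).2] at hφ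
  exact ⟨φ, φ.2, hφ⟩

end EntropyDuality

section ProbabilityMeasure

variable {Y : Type*} [MeasurableSpace Y]

/-- Convexity of an extended real valued function on the space of probability measures. -/
def IsConvexOnProbabilityMeasures (Φ : ProbabilityMeasure Y → EReal) : Prop :=
  ∀ (p q m : ProbabilityMeasure Y) (t : ℝ), 0 ≤ t → t ≤ 1 →
    (m : Measure Y) = ENNReal.ofReal t • (p : Measure Y)
        + ENNReal.ofReal (1 - t) • (q : Measure Y) →
    Φ m ≤ (t : EReal) * Φ p + ((1 - t : ℝ) : EReal) * Φ q

variable [TopologicalSpace Y] [CompactSpace Y]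

lemma abs_integral_le_norm (p : ProbabilityMeasure Y) (ψ : C(Y, ℝ)) :
    |∫ y, ψ y ∂(p : Measure Y)| ≤ ‖ψ‖ := by
  simpa using norm_integral_le_of_norm_le_const (μ := (p : Measure Y))
    (Eventually.of_forall ψ.norm_coe_le_norm)

variable [BorelSpace Y]

/-- Integration against a probability measure, as an element of the weak* dual of `C(Y, ℝ)`. -/
def integralFunctional (p : ProbabilityMeasure Y) : WeakDual ℝ C(Y, ℝ) :=
  StrongDual.toWeakDual <| LinearMap.mkContinuous
    { toFun ψ := ∫ y, ψ y ∂(p : Measure Y)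
      map_add' ψ χ :=
        integral_add (integrable_of_continuous ψ.continuous) (integrable_of_continuous χ.continuous)
      map_smul' a ψ := integral_const_mul a ψ } 1
    fun ψ => (abs_integral_le_norm p ψ).trans_eq (one_mul _).symm

lemma integralFunctional_apply (p : ProbabilityMeasure Y) (ψ : C(Y, ℝ)) :
    integralFunctional p ψ = ∫ y, ψ y ∂(p : Measure Y) :=
  rfl

lemma exists_probabilityMeasure_eq_add (p q : ProbabilityMeasure Y) {t : ℝ} (ht₀ : 0 ≤ t)
    (ht₁ : t ≤ 1) :
    ∃ m : ProbabilityMeasure Y, (m : Measure Y) = ENNReal.ofReal t • (p : Measure Y)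
        + ENNReal.ofReal (1 - t) • (q : Measure Y) ∧
      integralFunctional m = t • integralFunctional p + (1 - t) • integralFunctional q := by
  refine ⟨⟨_, ⟨?_⟩⟩, rfl, DFunLike.ext _ _ fun ψ => ?_⟩
  · simp [← ENNReal.ofReal_add ht₀ (sub_nonneg.2 ht₁)]
  · have hint (p : ProbabilityMeasure Y) (s : ℝ) :
        Integrable ψ (ENNReal.ofReal s • (p : Measure Y)) :=
      (integrable_of_continuous ψ.continuous).smul_measure ENNReal.ofReal_ne_top
    refine (integral_add_measure (hint p t) (hint q (1 - t))).trans ?_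
    simp only [integral_smul_measure, ENNReal.toReal_ofReal, ht₀, sub_nonneg.2 ht₁]
    rfl

lemma convex_image_epigraph {Φ : ProbabilityMeasure Y → EReal}
    (hconv : IsConvexOnProbabilityMeasures Φ) :
    Convex ℝ (Prod.map integralFunctional id ''
      {z : ProbabilityMeasure Y × ℝ | Φ z.1 ≤ (z.2 : EReal)}) := by
  rintro _ ⟨⟨p, r⟩, hp, rfl⟩ _ ⟨⟨q, s⟩, hq, rfl⟩ a b ha hb hab
  obtain rfl : b = 1 - a := by linarith
  obtain ⟨m, hm, hm_eq⟩ := exists_probabilityMeasure_eq_add p q ha (by linarith)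
  refine ⟨(m, a * r + (1 - a) * s), ?_, by simp [hm_eq]⟩
  calc Φ m ≤ (a : EReal) * Φ p + ((1 - a : ℝ) : EReal) * Φ q := hconv p q m a ha (by linarith) hm
    _ ≤ (a : EReal) * r + ((1 - a : ℝ) : EReal) * s := by
        have ha' : (0 : EReal) ≤ a := mod_cast ha
        have hb' : (0 : EReal) ≤ ((1 - a : ℝ) : EReal) := mod_cast hb
        exact add_le_add (mul_le_mul_of_nonneg_left hp ha') (mul_le_mul_of_nonneg_left hq hb')
    _ = ((a * r + (1 - a) * s : ℝ) : EReal) := by push_cast; rfl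

variable [TopologicalSpace.MetrizableSpace Y]

lemma isClosedEmbedding_integralFunctional :
    IsClosedEmbedding (integralFunctional (Y := Y)) := by
  refine Continuous.isClosedEmbedding (WeakDual.continuous_of_continuous_eval fun ψ =>
    ProbabilityMeasure.continuous_integral_continuousMap ψ) fun p q hpq => Subtype.ext ?_
  have (p : ProbabilityMeasure Y) : IsFiniteMeasure (p : Measure Y) := inferInstance
  exact ext_of_forall_integral_eq_of_IsFiniteMeasure (μ := (p : Measure Y)) (ν := (q : Measure Y))
    fun f => DFunLike.congr_fun hpq f.toContinuousMap

lemma exists_continuous_integral_minorant {Φ : ProbabilityMeasure Y → EReal}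
    (hlsc : LowerSemicontinuous Φ) {K : ℝ} (hK : ∀ p, (K : EReal) ≤ Φ p)
    (hconv : IsConvexOnProbabilityMeasures Φ) {p₀ : ProbabilityMeasure Y} {c : ℝ}
    (hc : (c : EReal) < Φ p₀) :
    ∃ ψ : C(Y, ℝ), c < ∫ y, ψ y ∂(p₀ : Measure Y) ∧
      ∀ p : ProbabilityMeasure Y, ((∫ y, ψ y ∂(p : Measure Y) : ℝ) : EReal) ≤ Φ p := by
  have : LocallyConvexSpace ℝ (WeakDual ℝ C(Y, ℝ)) :=
    inferInstanceAs (LocallyConvexSpace ℝ (WeakBilin (topDualPairing ℝ C(Y, ℝ))))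
  have hclosed : IsClosed (Prod.map integralFunctional id ''
      {z : ProbabilityMeasure Y × ℝ | Φ z.1 ≤ (z.2 : EReal)}) :=
    (isClosedEmbedding_integralFunctional.prodMap .id).isClosedMap _ <|
      hlsc.isClosed_epigraph.preimage (continuous_id.prodMap continuous_coe_real_ereal)
  have hnotMem : (integralFunctional p₀, c) ∉ Prod.map integralFunctional id ''
      {z : ProbabilityMeasure Y × ℝ | Φ z.1 ≤ (z.2 : EReal)} := by
    rintro ⟨⟨p, s⟩, hp, heq⟩
    obtain ⟨hpp₀, rfl⟩ := Prod.ext_iff.1 heq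
    obtain rfl := isClosedEmbedding_integralFunctional.injective hpp₀
    exact hc.not_ge hp
  obtain ⟨ℓ, b, hcb, hle⟩ := exists_affine_minorant_of_notMem hclosed
    (convex_image_epigraph hconv)
    (by
      rintro _ ⟨⟨p, s⟩, hp, rfl⟩ r hr
      exact ⟨(p, r), le_trans hp (EReal.coe_le_coe_iff.2 hr), rfl⟩)
    (K := K)
    (by
      rintro _ ⟨⟨p, s⟩, hp, rfl⟩
      exact EReal.coe_le_coe_iff.1 ((hK p).trans hp)) hnotMem
  obtain ⟨ψ, hψℓ⟩ : ∃ ψ : C(Y, ℝ), ∀ L, ℓ L = L ψ :=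
    (LinearMap.dualEmbedding_surjective (topDualPairing ℝ C(Y, ℝ)) ℓ).imp fun ψ hψ L =>
      (DFunLike.congr_fun hψ L).symm
  have hψ (p : ProbabilityMeasure Y) : ∫ y, (ψ + .const Y b) y ∂(p : Measure Y) =
      ℓ (integralFunctional p) + b := by
    refine (integral_add (integrable_of_continuous ψ.continuous) (integrable_const b)).trans ?_
    simp [hψℓ, integralFunctional_apply]
  refine ⟨ψ + .const Y b, by rwa [hψ], fun p => ?_⟩
  rw [hψ]
  exact EReal.le_of_forall_lt_iff_le.1 fun r hr =>
    EReal.coe_le_coe_iff.2 (hle _ ⟨(p, r), hr.le, rfl⟩)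

end ProbabilityMeasure

section CostMinorants

lemma coe_mix_le {a b t : ℝ} {z : EReal} (ha : (a : EReal) ≤ z) (hb : (b : EReal) ≤ z)
    (ht : t ∈ Icc (0 : ℝ) 1) : ((t * a + (1 - t) * b : ℝ) : EReal) ≤ z := by
  have hle : t * a + (1 - t) * b ≤ max a b :=
    convex_Iic (max a b) (mem_Iic.2 (le_max_left a b)) (mem_Iic.2 (le_max_right a b)) ht.1
      (sub_nonneg.2 ht.2) (add_sub_cancel t 1)
  refine (EReal.coe_le_coe_iff.2 hle).trans ?_
  rcases max_choice a b with h | h <;> rwa [h]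

variable {X Y : Type*} [TopologicalSpace X] [TopologicalSpace Y] [MeasurableSpace Y]
  {C : X → ProbabilityMeasure Y → EReal}

/-- The continuous functions `f` on `X × Y` lying below the weak transport cost `C`, in the sense
that `∫ f(x, y) dp(y) ≤ C x p`. -/
def costMinorants (C : X → ProbabilityMeasure Y → EReal) : Set C(X × Y, ℝ) :=
  {f | ∀ x (p : ProbabilityMeasure Y), ((∫ y, f (x, y) ∂(p : Measure Y) : ℝ) : EReal) ≤ C x p}

lemma const_mem_costMinorants {K : ℝ} (hK : ∀ x p, (K : EReal) ≤ C x p) :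
    ContinuousMap.const (X × Y) K ∈ costMinorants C := by
  intro x p
  simpa using hK x p

variable [CompactSpace Y] [BorelSpace Y]

lemma integrable_prodMk (f : C(X × Y, ℝ)) (x : X) (p : Measure Y) [IsFiniteMeasure p] :
    Integrable (fun y => f (x, y)) p :=
  integrable_of_continuous (f.continuous.comp (Continuous.prodMk_right x))

lemma mem_costMinorants_of_le {f g : C(X × Y, ℝ)} (hg : g ∈ costMinorants C) (hfg : f ≤ g) :
    f ∈ costMinorants C := fun x p =>
  (EReal.coe_le_coe_iff.2 (integral_mono (integrable_prodMk f x p) (integrable_prodMk g x p)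
    fun y => hfg (x, y))).trans (hg x p)

lemma integral_interpolation {f g h : C(X × Y, ℝ)} {θ : X → ℝ}
    (hh : ∀ x y, h (x, y) = θ x * f (x, y) + (1 - θ x) * g (x, y)) (x : X) (p : Measure Y)
    [IsFiniteMeasure p] :
    ∫ y, h (x, y) ∂p = θ x * ∫ y, f (x, y) ∂p + (1 - θ x) * ∫ y, g (x, y) ∂p := by
  simp only [hh]
  rw [integral_add ((integrable_prodMk f x p).const_mul _) ((integrable_prodMk g x p).const_mul _),
    integral_const_mul, integral_const_mul]

lemma interpolation_mem_costMinorants {f g h : C(X × Y, ℝ)} (hf : f ∈ costMinorants C)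
    (hg : g ∈ costMinorants C) {θ : X → ℝ} (hθ : ∀ x, θ x ∈ Icc (0 : ℝ) 1)
    (hh : ∀ x y, h (x, y) = θ x * f (x, y) + (1 - θ x) * g (x, y)) : h ∈ costMinorants C := by
  intro x p
  rw [integral_interpolation hh]
  exact coe_mix_le (hf x p) (hg x p) (hθ x)

lemma convex_costMinorants : Convex ℝ (costMinorants C) := by
  intro f hf g hg s t hs ht hst
  obtain rfl : t = 1 - s := by linarith
  exact interpolation_mem_costMinorants hf hg (θ := fun _ => s) (fun _ => ⟨hs, by linarith⟩)
    fun _ _ => rfl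

lemma exists_isOpen_integral_lt [TopologicalSpace.MetrizableSpace Y]
    (hlsc : LowerSemicontinuous fun z : X × ProbabilityMeasure Y => C z.1 z.2) {x₀ : X}
    {ψ : C(Y, ℝ)} (hψ : ∀ p : ProbabilityMeasure Y,
      ((∫ y, ψ y ∂(p : Measure Y) : ℝ) : EReal) < C x₀ p) :
    ∃ U : Set X, IsOpen U ∧ x₀ ∈ U ∧ ∀ x ∈ U, ∀ p : ProbabilityMeasure Y,
      ((∫ y, ψ y ∂(p : Measure Y) : ℝ) : EReal) < C x p := by
  have hcont : Continuous fun z : X × ProbabilityMeasure Y =>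
      (z, ((∫ y, ψ y ∂(z.2 : Measure Y) : ℝ) : EReal)) :=
    continuous_id.prodMk <| continuous_coe_real_ereal.comp <|
      (ProbabilityMeasure.continuous_integral_continuousMap ψ).comp continuous_snd
  have hopen : IsOpen {z : X × ProbabilityMeasure Y |
      ((∫ y, ψ y ∂(z.2 : Measure Y) : ℝ) : EReal) < C z.1 z.2} := by
    simpa [Set.compl_ofPred] using (hlsc.isClosed_epigraph.preimage hcont).isOpen_compl
  obtain ⟨U, V, hU, -, hxU, hV, hUV⟩ := generalized_tube_lemma (isCompact_singleton (x := x₀))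
    (isCompact_univ (X := ProbabilityMeasure Y)) hopen (by rintro ⟨x, p⟩ ⟨rfl, -⟩; exact hψ p)
  exact ⟨U, hU, hxU rfl, fun x hx p => hUV (mk_mem_prod hx (hV (mem_univ p)))⟩

/- Near `x₀` the minorant is `ψ`, which lies strictly below `C x₀` and hence, by compactness of the
space of probability measures, below `C x` for `x` near `x₀`; elsewhere it is the constant `K`. -/
lemma exists_mem_costMinorants_lt_integral [TopologicalSpace.MetrizableSpace Y] [NormalSpace X]
    [T1Space X]
    (hlsc : LowerSemicontinuous fun z : X × ProbabilityMeasure Y => C z.1 z.2) {K : ℝ}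
    (hK : ∀ x p, (K : EReal) ≤ C x p) (hconv : ∀ x, IsConvexOnProbabilityMeasures (C x)) {x₀ : X}
    {p₀ : ProbabilityMeasure Y} {c : ℝ} (hc : (c : EReal) < C x₀ p₀) :
    ∃ f ∈ costMinorants C, c < ∫ y, f (x₀, y) ∂(p₀ : Measure Y) := by
  obtain ⟨ψ, hcψ, hψ⟩ := exists_continuous_integral_minorant
    (LowerSemicontinuous.comp hlsc (Continuous.prodMk_right x₀)) (hK x₀) (hconv x₀) hc
  obtain ⟨δ, hδ, hcδ⟩ : ∃ δ > 0, c < ∫ y, ψ y ∂(p₀ : Measure Y) - δ :=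
    ⟨(∫ y, ψ y ∂(p₀ : Measure Y) - c) / 2, by linarith, by linarith⟩
  have hint (p : ProbabilityMeasure Y) :
      ∫ y, (ψ - .const Y δ) y ∂(p : Measure Y) = ∫ y, ψ y ∂(p : Measure Y) - δ :=
    (integral_sub (integrable_of_continuous ψ.continuous) (integrable_const δ)).trans (by simp)
  obtain ⟨U, hU, hx₀U, hUC⟩ := exists_isOpen_integral_lt hlsc (x₀ := x₀) (ψ := ψ - .const Y δ)
    fun p => (EReal.coe_lt_coe_iff.2 (by rw [hint]; exact sub_lt_self _ hδ)).trans_le (hψ p)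
  obtain ⟨θ, hθU, hθx₀, hθ⟩ := exists_continuous_zero_one_of_isClosed hU.isClosed_compl
    (isClosed_singleton (x := x₀)) (disjoint_singleton_right.2 fun h => h hx₀U)
  let f : C(X × Y, ℝ) := ⟨fun z => θ z.1 * (ψ - .const Y δ) z.2 + (1 - θ z.1) * K, by fun_prop⟩
  have hf (x : X) (p : ProbabilityMeasure Y) : ∫ y, f (x, y) ∂(p : Measure Y) =
      θ x * ∫ y, (ψ - .const Y δ) y ∂(p : Measure Y) + (1 - θ x) * K := by
    have := integral_interpolation (f := ⟨fun z => (ψ - .const Y δ) z.2, by fun_prop⟩)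
      (g := .const (X × Y) K) (h := f) (θ := θ) (fun _ _ => rfl) x (p : Measure Y)
    simpa using this
  refine ⟨f, fun x p => ?_, ?_⟩
  · rw [hf]
    by_cases hx : x ∈ U
    · exact coe_mix_le (hUC x hx p).le (hK x p) (hθ x)
    · simpa [hθU hx] using hK x p
  · rw [hf, hint, hθx₀ rfl]
    simpa using hcδ

lemma exists_seq_costMinorants_iSup_eq [TopologicalSpace.MetrizableSpace X] [CompactSpace X]
    [TopologicalSpace.MetrizableSpace Y]
    (hlsc : LowerSemicontinuous fun z : X × ProbabilityMeasure Y => C z.1 z.2) {K : ℝ}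
    (hK : ∀ x p, (K : EReal) ≤ C x p) (hconv : ∀ x, IsConvexOnProbabilityMeasures (C x)) :
    ∃ f : ℕ → costMinorants C, ∀ x (p : ProbabilityMeasure Y),
      C x p = ⨆ n, ((∫ y, (f n).1 (x, y) ∂(p : Measure Y) : ℝ) : EReal) := by
  have : Nonempty (costMinorants C) := ⟨⟨_, const_mem_costMinorants hK⟩⟩
  refine ⟨TopologicalSpace.denseSeq (costMinorants C), fun x p => le_antisymm ?_ ?_⟩
  · refine EReal.ge_of_forall_gt_iff_ge.1 fun c hc => ?_
    obtain ⟨f, hf, hcf⟩ := exists_mem_costMinorants_lt_integral hlsc hK hconv hc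
    have hcont : Continuous fun g : costMinorants C => integralFunctional p (g.1.curry x) :=
      (integralFunctional p).continuous.comp <| (continuous_eval_const x).comp <|
        ContinuousMap.continuous_curry.comp continuous_subtype_val
    obtain ⟨n, hn⟩ := (TopologicalSpace.denseRange_denseSeq (costMinorants C)).exists_mem_open
      (isOpen_lt continuous_const hcont) ⟨⟨f, hf⟩, hcf⟩
    refine le_trans (EReal.coe_le_coe_iff.2 hn.le) (le_iSup_of_le n ?_)
    rfl
  · exact iSup_le fun n => (TopologicalSpace.denseSeq (costMinorants C) n).2 x p

end CostMinorants

section TransportCostDuality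

variable {X Y : Type*} [TopologicalSpace X] [MeasurableSpace X] [TopologicalSpace Y]
  [CompactSpace Y] [MeasurableSpace Y] [BorelSpace Y] [StandardBorelSpace Y] [Nonempty Y]
  {C : X → ProbabilityMeasure Y → EReal} (γ : Measure (X × Y)) [IsFiniteMeasure γ]

lemma isDecomposable_integral_condKernel :
    IsDecomposable fun (f : costMinorants C) x => ∫ y, f.1 (x, y) ∂(γ.condKernel x) := by
  intro f g θ hθ
  let h : C(X × Y, ℝ) := ⟨fun z => θ z.1 * f.1 z + (1 - θ z.1) * g.1 z, by fun_prop⟩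
  exact ⟨⟨h, interpolation_mem_costMinorants f.2 g.2 hθ fun _ _ => rfl⟩, fun x =>
    (integral_interpolation (fun _ _ => rfl) x _).ge⟩

variable [CompactSpace X] [BorelSpace X] [TopologicalSpace.MetrizableSpace Y]

lemma integral_le_eIntegral_condKernel {f : C(X × Y, ℝ)} (hf : f ∈ costMinorants C) :
    ((∫ z, f z ∂γ : ℝ) : EReal) ≤
      eIntegral γ.fst (fun x => C x ⟨γ.condKernel x, inferInstance⟩) := by
  have hint : Integrable f γ := integrable_of_continuous f.continuous
  rw [← Measure.integral_condKernel hint, ← eIntegral_coe hint.integral_condKernel]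
  exact eIntegral_mono fun x => hf x ⟨γ.condKernel x, inferInstance⟩

lemma exists_lt_integral_of_lt_eIntegral_condKernel [TopologicalSpace.MetrizableSpace X]
    (hlsc : LowerSemicontinuous fun z : X × ProbabilityMeasure Y => C z.1 z.2) {K : ℝ}
    (hK : ∀ x p, (K : EReal) ≤ C x p) (hconv : ∀ x, IsConvexOnProbabilityMeasures (C x)) {c : ℝ}
    (hc : (c : EReal) < eIntegral γ.fst (fun x => C x ⟨γ.condKernel x, inferInstance⟩)) :
    ∃ f ∈ costMinorants C, c < ∫ z, f z ∂γ := by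
  obtain ⟨f, hf⟩ := exists_seq_costMinorants_iSup_eq hlsc hK hconv
  rw [funext fun x => hf x ⟨γ.condKernel x, inferInstance⟩] at hc
  obtain ⟨g, hg⟩ := (isDecomposable_integral_condKernel γ).exists_lt_integral_of_lt_eIntegral_iSup
    (fun g => (integrable_of_continuous g.1.continuous).integral_condKernel) f hc
  exact ⟨g, g.2, by
    rwa [Measure.integral_condKernel (integrable_of_continuous g.1.continuous)] at hg⟩

end TransportCostDuality

section Multiplier

variable {Z : Type*} [TopologicalSpace Z]

lemma convex_setOf_forall_pos : Convex ℝ {f : C(Z, ℝ) | ∀ z, 0 < f z} := by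
  intro f hf g hg s t hs ht hst z
  exact convex_Ioi (0 : ℝ) (hf z) (hg z) hs ht hst

lemma nonneg_of_forall_pos_le (L : C(Z, ℝ) →ₗ[ℝ] ℝ) {K : ℝ}
    (hL : ∀ f : C(Z, ℝ), (∀ z, 0 < f z) → K ≤ L f) {f : C(Z, ℝ)} (hf : ∀ z, 0 ≤ f z) : 0 ≤ L f := by
  by_contra! hneg
  obtain ⟨n, hn⟩ : ∃ n : ℕ, (L 1 - K) / (-L f) < n := exists_nat_gt _
  have := hL (1 + (n : ℝ) • f) fun z => by
    simpa using add_pos_of_pos_of_nonneg one_pos (mul_nonneg n.cast_nonneg (hf z))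
  rw [map_add, map_smul, smul_eq_mul] at this
  rw [div_lt_iff₀ (neg_pos.2 hneg)] at hn
  linarith

variable [CompactSpace Z]

lemma isOpen_setOf_forall_pos : IsOpen {f : C(Z, ℝ) | ∀ z, 0 < f z} := by
  simpa [MapsTo] using ContinuousMap.isOpen_setOfPred_mapsTo (isCompact_univ (X := Z))
    (isOpen_Ioi (a := (0 : ℝ)))

variable [T2Space Z] [MeasurableSpace Z] [BorelSpace Z]

lemma exists_measure_integral_eq (L : C(Z, ℝ) →ₗ[ℝ] ℝ)
    (hL : ∀ f : C(Z, ℝ), (∀ z, 0 ≤ f z) → 0 ≤ L f) :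
    ∃ γ : Measure Z, IsFiniteMeasure γ ∧ ∀ f : C(Z, ℝ), ∫ z, f z ∂γ = L f := by
  let L' : CompactlySupportedContinuousMap Z ℝ →ₚ[ℝ] ℝ := PositiveLinearMap.mk₀
    { toFun f := L f.toContinuousMap
      map_add' f g := map_add L f.toContinuousMap g.toContinuousMap
      map_smul' a f := map_smul L a f.toContinuousMap } fun f hf => hL _ hf
  exact ⟨RealRMK.rieszMeasure L', inferInstance, fun f =>
    RealRMK.integral_rieszMeasure L' (CompactlySupportedContinuousMap.continuousMapEquiv f)⟩

/-- Existence of a Lagrange multiplier for the constraint `0 < g` in the maximization of `j` over a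
convex set of pairs `(g, j)` satisfying Slater's condition. -/
lemma exists_measure_forall_integral_add_le {K : Set (C(Z, ℝ) × ℝ)} (hK : Convex ℝ K) {c : ℝ}
    (hc : ∀ k ∈ K, (∀ z, 0 < k.1 z) → k.2 ≤ c) {k₀ : C(Z, ℝ) × ℝ} (hk₀ : k₀ ∈ K)
    (hpos : ∀ z, 0 < k₀.1 z) :
    ∃ γ : Measure Z, IsFiniteMeasure γ ∧ ∀ k ∈ K, ∫ z, k.1 z ∂γ + k.2 ≤ c := by
  obtain ⟨ℓ, u, hlt, hle⟩ := geometric_hahn_banach_open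
    (convex_setOf_forall_pos.prod (convex_Ioi c)) (isOpen_setOf_forall_pos.prod isOpen_Ioi) hK
    (disjoint_left.2 fun k hk hkK => (hc k hkK hk.1).not_gt hk.2)
  let L : C(Z, ℝ) →ₗ[ℝ] ℝ := (ℓ.comp (ContinuousLinearMap.inl ℝ C(Z, ℝ) ℝ)).toLinearMap
  let β := ℓ (0, 1)
  have hℓ (g : C(Z, ℝ)) (j : ℝ) : ℓ (g, j) = L g + β * j := by
    rw [mul_comm, ← smul_eq_mul, ← map_smul]
    simp [L, ← map_add]
  replace hlt (g : C(Z, ℝ)) (hg : ∀ z, 0 < g z) (r : ℝ) (hr : c < r) : L g + β * r < u :=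
    hℓ g r ▸ hlt (g, r) ⟨hg, hr⟩
  replace hle (k : C(Z, ℝ) × ℝ) (hk : k ∈ K) : u ≤ L k.1 + β * k.2 := hℓ k.1 k.2 ▸ hle k hk
  have hβ : β < 0 := by
    have := hlt k₀.1 hpos (c + 1) (lt_add_one c)
    nlinarith [hle k₀ hk₀, hc k₀ hk₀ hpos]
  have hu : β * c ≤ u := by
    have hlim : Tendsto (fun ε : ℝ => ε * L 1 + β * (c + ε)) (𝓝[>] 0) (𝓝 (β * c)) :=
      (Continuous.tendsto' (by fun_prop) 0 (β * c) (by simp)).mono_left nhdsWithin_le_nhds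
    refine le_of_tendsto hlim (eventually_mem_nhdsWithin.mono fun ε (hε : 0 < ε) => ?_)
    simpa using (hlt (ε • 1) (fun z => by simpa using hε) (c + ε) (by linarith)).le
  obtain ⟨γ, hγ, hint⟩ := exists_measure_integral_eq (β⁻¹ • L) fun f hf =>
    nonneg_of_forall_pos_le (K := β⁻¹ * (u - β * (c + 1))) (β⁻¹ • L) (fun g hg =>
      mul_le_mul_of_nonpos_left (by linarith [hlt g hg (c + 1) (lt_add_one c)])
        (inv_nonpos.2 hβ.le)) hf
  refine ⟨γ, hγ, fun k hk => ?_⟩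
  calc ∫ z, k.1 z ∂γ + k.2 = β⁻¹ * (L k.1 + β * k.2) := by
        rw [hint, mul_add, inv_mul_cancel_left₀ hβ.ne]; rfl
    _ ≤ β⁻¹ * (β * c) := mul_le_mul_of_nonpos_left (hu.trans (hle k hk)) (inv_nonpos.2 hβ.le)
    _ = c := inv_mul_cancel_left₀ hβ.ne c

end Multiplier

section Duality

/-- The direct sum `φ₁ ⊕ φ₂ : (x, y) ↦ φ₁ x + φ₂ y`, through which the dual constraint reads
`φ₁ ⊕ φ₂ ∈ costMinorants C`. -/
def directSum {X Y : Type*} [TopologicalSpace X] [TopologicalSpace Y] (φ₁ : C(X, ℝ))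
    (φ₂ : C(Y, ℝ)) : C(X × Y, ℝ) :=
  φ₁.comp .fst + φ₂.comp .snd

/-- The dual objective `∫ F₁°(φ₁) dμ₁ + ∫ F₂°(φ₂) dμ₂`, meaningful for potentials of `F₁` and
`F₂`. -/
def dualObjective {X Y : Type*} [TopologicalSpace X] [TopologicalSpace Y] [MeasurableSpace X]
    [MeasurableSpace Y] (F₁ F₂ : EntropyFn) (μ₁ : Measure X) (μ₂ : Measure Y) (φ₁ : C(X, ℝ))
    (φ₂ : C(Y, ℝ)) : ℝ :=
  ∫ x, F₁.circReal (φ₁ x) ∂μ₁ + ∫ y, F₂.circReal (φ₂ y) ∂μ₂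

/-- The pairs of a slack `f - φ₁ ⊕ φ₂` of the dual constraint and a number at most the dual
objective at `(φ₁, φ₂)`. The dual problem maximizes the second component over the pairs whose first
component is nonnegative. -/
def dualHypograph {X Y : Type*} [TopologicalSpace X] [TopologicalSpace Y] [MeasurableSpace X]
    [MeasurableSpace Y] (C : X → ProbabilityMeasure Y → EReal) (F₁ F₂ : EntropyFn)
    (μ₁ : Measure X) (μ₂ : Measure Y) : Set (C(X × Y, ℝ) × ℝ) :=
  {w | ∃ f ∈ costMinorants C, ∃ φ₁ ∈ F₁.potentials X, ∃ φ₂ ∈ F₂.potentials Y,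
    w.1 = f - directSum φ₁ φ₂ ∧ w.2 ≤ dualObjective F₁ F₂ μ₁ μ₂ φ₁ φ₂}

lemma add_add_le_coe_of_forall_lt {x y z : EReal} {c : ℝ}
    (h : ∀ a b d : ℝ, (a : EReal) < x → (b : EReal) < y → (d : EReal) < z → a + b + d ≤ c) :
    x + y + z ≤ c := by
  refine EReal.add_le_of_forall_lt fun s hs t ht => ?_
  obtain ⟨d, htd, hd⟩ := EReal.lt_iff_exists_real_btwn.1 ht
  have hxy : x + y ≤ ((c - d : ℝ) : EReal) := by
    refine EReal.add_le_of_forall_lt fun u hu v hv => ?_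
    obtain ⟨a, hua, ha⟩ := EReal.lt_iff_exists_real_btwn.1 hu
    obtain ⟨b, hvb, hb⟩ := EReal.lt_iff_exists_real_btwn.1 hv
    refine (add_le_add hua.le hvb.le).trans ?_
    exact EReal.coe_le_coe_iff.2 (le_sub_iff_add_le.2 (h a b d ha hb hd))
  calc s + t ≤ ((c - d : ℝ) : EReal) + d := add_le_add (hs.le.trans hxy) htd.le
    _ = c := by rw [← EReal.coe_add, sub_add_cancel]

section Potentials

variable {X : Type*} [TopologicalSpace X] [CompactSpace X] [MeasurableSpace X] [BorelSpace X]
  {μ : Measure X} [IsFiniteMeasure μ] {F : EntropyFn} {φ ψ : C(X, ℝ)}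

lemma eIntegral_circ_comp (hφ : φ ∈ F.potentials X) :
    eIntegral μ (fun x => F.circ (φ x)) = ((∫ x, F.circReal (φ x) ∂μ : ℝ) : EReal) := by
  rw [← eIntegral_coe (integrable_of_continuous (EntropyFn.continuous_circReal_comp hφ))]
  simp only [EntropyFn.coe_circReal (interior_subset (hφ _))]

lemma concaveOn_integral_circReal :
    ConcaveOn ℝ (F.potentials X) fun φ => ∫ x, F.circReal (φ x) ∂μ := by
  have hconv : Convex ℝ (F.potentials X) := fun φ hφ ψ hψ s t hs ht hst x =>
    EntropyFn.concaveOn_circReal.1.interior (hφ x) (hψ x) hs ht hst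
  have hint {φ : C(X, ℝ)} (hφ : φ ∈ F.potentials X) : Integrable (fun x => F.circReal (φ x)) μ :=
    integrable_of_continuous (EntropyFn.continuous_circReal_comp hφ)
  refine ⟨hconv, fun φ hφ ψ hψ s t hs ht hst => ?_⟩
  simp only [smul_eq_mul]
  rw [← integral_const_mul, ← integral_const_mul,
    ← integral_add ((hint hφ).const_mul s) ((hint hψ).const_mul t)]
  exact integral_mono (((hint hφ).const_mul s).add ((hint hψ).const_mul t))
    (hint (hconv hφ hψ hs ht hst)) fun x => EntropyFn.concaveOn_circReal.2
      (interior_subset (hφ x)) (interior_subset (hψ x)) hs ht hst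

end Potentials

variable {X Y : Type*} [TopologicalSpace X] [TopologicalSpace Y] [CompactSpace Y]
  [MeasurableSpace Y] [BorelSpace Y] {C : X → ProbabilityMeasure Y → EReal} {φ₁ : C(X, ℝ)}
  {φ₂ : C(Y, ℝ)}

lemma directSum_mem_costMinorants_iff : directSum φ₁ φ₂ ∈ costMinorants C ↔
    ∀ x (p : ProbabilityMeasure Y),
      ((φ₁ x + ∫ y, φ₂ y ∂(p : Measure Y) : ℝ) : EReal) ≤ C x p := by
  have hint (x : X) (p : ProbabilityMeasure Y) :
      ∫ y, directSum φ₁ φ₂ (x, y) ∂(p : Measure Y) = φ₁ x + ∫ y, φ₂ y ∂(p : Measure Y) :=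
    (integral_add (integrable_const (φ₁ x)) (integrable_of_continuous φ₂.continuous)).trans
      (by simp)
  simp only [costMinorants, mem_ofPred_eq, hint]

variable [CompactSpace X] [MeasurableSpace X] [BorelSpace X]

lemma integral_directSum [TopologicalSpace.MetrizableSpace Y]
    (γ : Measure (X × Y)) [IsFiniteMeasure γ] :
    ∫ z, directSum φ₁ φ₂ z ∂γ = ∫ x, φ₁ x ∂γ.fst + ∫ y, φ₂ y ∂γ.snd := by
  have hfst : ∫ x, φ₁ x ∂γ.fst = ∫ z, φ₁ z.1 ∂γ :=
    integral_map measurable_fst.aemeasurable φ₁.continuous.aestronglyMeasurable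
  have hsnd : ∫ y, φ₂ y ∂γ.snd = ∫ z, φ₂ z.2 ∂γ :=
    integral_map measurable_snd.aemeasurable φ₂.continuous.aestronglyMeasurable
  rw [hfst, hsnd]
  exact integral_add (integrable_of_continuous (φ₁.comp .fst).continuous)
    (integrable_of_continuous (φ₂.comp .snd).continuous)

variable {F₁ F₂ : EntropyFn} {μ₁ : Measure X} {μ₂ : Measure Y} [IsFiniteMeasure μ₁]
  [IsFiniteMeasure μ₂]

lemma coe_dualObjective (hφ₁ : φ₁ ∈ F₁.potentials X) (hφ₂ : φ₂ ∈ F₂.potentials Y) :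
    (dualObjective F₁ F₂ μ₁ μ₂ φ₁ φ₂ : EReal) =
      eIntegral μ₁ (fun x => F₁.circ (φ₁ x)) + eIntegral μ₂ (fun y => F₂.circ (φ₂ y)) := by
  rw [eIntegral_circ_comp hφ₁, eIntegral_circ_comp hφ₂, ← EReal.coe_add, dualObjective]

lemma convex_dualHypograph : Convex ℝ (dualHypograph C F₁ F₂ μ₁ μ₂) := by
  rintro ⟨_, j⟩ ⟨f, hf, φ₁, hφ₁, φ₂, hφ₂, rfl, hj⟩ ⟨_, j'⟩ ⟨f', hf', φ₁', hφ₁', φ₂', hφ₂', rfl, hj'⟩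
    s t hs ht hst
  have h₁ := concaveOn_integral_circReal (μ := μ₁) (F := F₁)
  have h₂ := concaveOn_integral_circReal (μ := μ₂) (F := F₂)
  refine ⟨_, convex_costMinorants hf hf' hs ht hst, _, h₁.1 hφ₁ hφ₁' hs ht hst, _,
    h₂.1 hφ₂ hφ₂' hs ht hst, ?_, ?_⟩
  · ext z
    simp only [directSum, Prod.smul_mk, Prod.mk_add_mk, ContinuousMap.add_apply,
      ContinuousMap.sub_apply, ContinuousMap.smul_apply, ContinuousMap.comp_apply, smul_eq_mul]
    ring
  · calc s * j + t * j'
        ≤ s * dualObjective F₁ F₂ μ₁ μ₂ φ₁ φ₂ + t * dualObjective F₁ F₂ μ₁ μ₂ φ₁' φ₂' :=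
          add_le_add (mul_le_mul_of_nonneg_left hj hs) (mul_le_mul_of_nonneg_left hj' ht)
      _ = s * ∫ x, F₁.circReal (φ₁ x) ∂μ₁ + t * ∫ x, F₁.circReal (φ₁' x) ∂μ₁ +
          (s * ∫ y, F₂.circReal (φ₂ y) ∂μ₂ + t * ∫ y, F₂.circReal (φ₂' y) ∂μ₂) := by
          unfold dualObjective
          ring
      _ ≤ _ := add_le_add (h₁.2 hφ₁ hφ₁' hs ht hst) (h₂.2 hφ₂ hφ₂' hs ht hst)

variable [TopologicalSpace.MetrizableSpace Y] [StandardBorelSpace Y] [Nonempty Y]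

lemma coe_dualObjective_le_wCost (hφ₁ : φ₁ ∈ F₁.potentials X) (hφ₂ : φ₂ ∈ F₂.potentials Y)
    (hC : directSum φ₁ φ₂ ∈ costMinorants C) (γ : Measure (X × Y)) (hγ : IsFiniteMeasure γ) :
    (dualObjective F₁ F₂ μ₁ μ₂ φ₁ φ₂ : EReal) ≤ wCost C F₁ F₂ μ₁ μ₂ γ hγ := by
  refine le_trans (le_of_eq ?_) (add_le_add (add_le_add (integral_circReal_sub_le_entF hφ₁)
    (integral_circReal_sub_le_entF hφ₂)) (integral_le_eIntegral_condKernel γ hC))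
  rw [← EReal.coe_add, ← EReal.coe_add, integral_directSum, dualObjective]
  congr 1
  ring

variable [TopologicalSpace.MetrizableSpace X]

lemma wCost_le_coe_of_forall_dualHypograph
    (hlsc : LowerSemicontinuous fun z : X × ProbabilityMeasure Y => C z.1 z.2) {k : ℝ}
    (hk : ∀ x p, (k : EReal) ≤ C x p) (hconv : ∀ x, IsConvexOnProbabilityMeasures (C x))
    (γ : Measure (X × Y)) (hγ : IsFiniteMeasure γ) {c : ℝ}
    (hc : ∀ w ∈ dualHypograph C F₁ F₂ μ₁ μ₂, ∫ z, w.1 z ∂γ + w.2 ≤ c) :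
    wCost C F₁ F₂ μ₁ μ₂ γ hγ ≤ c := by
  refine add_add_le_coe_of_forall_lt fun a b d ha hb hd => ?_
  obtain ⟨φ₁, hφ₁, haφ₁⟩ := exists_lt_integral_circReal_sub_of_lt_entF ha
  obtain ⟨φ₂, hφ₂, hbφ₂⟩ := exists_lt_integral_circReal_sub_of_lt_entF hb
  obtain ⟨f, hf, hdf⟩ := exists_lt_integral_of_lt_eIntegral_condKernel γ hlsc hk hconv hd
  have hcf := hc (f - directSum φ₁ φ₂, dualObjective F₁ F₂ μ₁ μ₂ φ₁ φ₂)
    ⟨f, hf, φ₁, hφ₁, φ₂, hφ₂, rfl, le_rfl⟩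
  have hsub : ∫ z, (f - directSum φ₁ φ₂) z ∂γ = ∫ z, f z ∂γ - ∫ z, directSum φ₁ φ₂ z ∂γ :=
    integral_sub (integrable_of_continuous f.continuous)
      (integrable_of_continuous (directSum φ₁ φ₂).continuous)
  simp only [hsub, integral_directSum, dualObjective] at hcf
  linarith

lemma wOpt_le_coe_of_forall_dualObjective_le
    (hlsc : LowerSemicontinuous fun z : X × ProbabilityMeasure Y => C z.1 z.2) {r₁ r₂ k c : ℝ}
    (hr₁ : (r₁ : EReal) < F₁.recC) (hr₂ : (r₂ : EReal) < F₂.recC)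
    (hk : ∀ x p, (k : EReal) ≤ C x p) (hpos : 0 < r₁ + r₂ + k)
    (hconv : ∀ x, IsConvexOnProbabilityMeasures (C x))
    (hc : ∀ φ₁ ∈ F₁.potentials X, ∀ φ₂ ∈ F₂.potentials Y, directSum φ₁ φ₂ ∈ costMinorants C →
      dualObjective F₁ F₂ μ₁ μ₂ φ₁ φ₂ ≤ c) :
    wOpt C F₁ F₂ μ₁ μ₂ ≤ c := by
  have hfeasible : ∀ w ∈ dualHypograph C F₁ F₂ μ₁ μ₂, (∀ z, 0 < w.1 z) → w.2 ≤ c := by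
    rintro ⟨_, j⟩ ⟨f, hf, φ₁, hφ₁, φ₂, hφ₂, rfl, hj⟩ hslack
    exact hj.trans (hc φ₁ hφ₁ φ₂ hφ₂
      (mem_costMinorants_of_le hf fun z => (sub_pos.1 (hslack z)).le))
  let φ₁ : C(X, ℝ) := .const X (-r₁)
  let φ₂ : C(Y, ℝ) := .const Y (-r₂)
  have hslater : (.const (X × Y) k - directSum φ₁ φ₂, dualObjective F₁ F₂ μ₁ μ₂ φ₁ φ₂) ∈
      dualHypograph C F₁ F₂ μ₁ μ₂ :=
    ⟨_, const_mem_costMinorants hk,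
      φ₁, fun _ => EntropyFn.mem_interior_circDom_of_neg_lt_recC (by simpa [φ₁] using hr₁),
      φ₂, fun _ => EntropyFn.mem_interior_circDom_of_neg_lt_recC (by simpa [φ₂] using hr₂),
      rfl, le_rfl⟩
  obtain ⟨γ, hγ, hmult⟩ := exists_measure_forall_integral_add_le convex_dualHypograph hfeasible
    hslater fun z => by
      change 0 < k - (-r₁ + -r₂)
      linarith
  calc wOpt C F₁ F₂ μ₁ μ₂ ≤ wCost C F₁ F₂ μ₁ μ₂ γ hγ := sInf_le ⟨γ, hγ, rfl⟩
    _ ≤ c := wCost_le_coe_of_forall_dualHypograph hlsc hk hconv γ hγ hmult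

end Duality

theorem stmt1_general
    {X₁ : Type*} [MetricSpace X₁] [CompactSpace X₁] [MeasurableSpace X₁] [BorelSpace X₁]
    {X₂ : Type*} [MetricSpace X₂] [CompactSpace X₂] [MeasurableSpace X₂] [BorelSpace X₂]
    [Nonempty X₂]
    (C : X₁ → ProbabilityMeasure X₂ → EReal)
    (hClsc : LowerSemicontinuous fun q : X₁ × ProbabilityMeasure X₂ => C q.1 q.2)
    (hCconv : ∀ x, IsConvexOnProbabilityMeasures (C x))
    (F₁ F₂ : EntropyFn)
    (hcoer : (0 : EReal) < ((F₁.recC : ℝ≥0∞) : EReal) + ((F₂.recC : ℝ≥0∞) : EReal)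
        + sInf { e : EReal | ∃ (x : X₁) (p : ProbabilityMeasure X₂), e = C x p })
    (μ₁ : Measure X₁) (μ₂ : Measure X₂) [IsFiniteMeasure μ₁] [IsFiniteMeasure μ₂] :
    wOpt C F₁ F₂ μ₁ μ₂
      = sSup { e : EReal | ∃ φ ∈ lamSet C F₁ F₂,
          e = eIntegral μ₁ (fun x => F₁.circ (φ.1 x)) +
              eIntegral μ₂ (fun x => F₂.circ (φ.2 x)) } := by
  obtain ⟨r₁, r₂, k, hr₁, hr₂, hk, hpos⟩ : ∃ r₁ r₂ k : ℝ, (r₁ : EReal) < F₁.recC ∧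
      (r₂ : EReal) < F₂.recC ∧ (k : EReal) < sInf {e | ∃ x p, e = C x p} ∧ 0 < r₁ + r₂ + k := by
    by_contra! hle
    exact hcoer.not_ge (add_add_le_coe_of_forall_lt fun a b d ha hb hd => hle a b d ha hb hd)
  refine le_antisymm (EReal.le_of_forall_lt_iff_le.1 fun c hc => ?_) (sSup_le ?_)
  · refine wOpt_le_coe_of_forall_dualObjective_le hClsc hr₁ hr₂
      (fun x p => hk.le.trans (sInf_le ⟨x, p, rfl⟩)) hpos hCconv fun φ₁ hφ₁ φ₂ hφ₂ hC => ?_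
    refine EReal.coe_le_coe_iff.1 (le_trans (le_sSup ?_) hc.le)
    exact ⟨(.mkOfCompact φ₁, .mkOfCompact φ₂),
      ⟨hφ₁, hφ₂, directSum_mem_costMinorants_iff.1 hC⟩, coe_dualObjective hφ₁ hφ₂⟩
  · rintro _ ⟨φ, ⟨hφ₁, hφ₂, hC⟩, rfl⟩
    refine le_sInf ?_
    rintro _ ⟨γ, hγ, rfl⟩
    exact (coe_dualObjective (φ₁ := φ.1.toContinuousMap) (φ₂ := φ.2.toContinuousMap)
      hφ₁ hφ₂).ge.trans
        (coe_dualObjective_le_wCost hφ₁ hφ₂ (directSum_mem_costMinorants_iff.2 hC) γ hγ)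

theorem stmt1
    {X₁ : Type*} [MetricSpace X₁] [CompactSpace X₁] [MeasurableSpace X₁] [BorelSpace X₁]
    {X₂ : Type*} [MetricSpace X₂] [CompactSpace X₂] [PolishSpace X₂] [MeasurableSpace X₂]
    [BorelSpace X₂] [Nonempty X₂]
    (C : X₁ → ProbabilityMeasure X₂ → EReal)
    (hClsc : LowerSemicontinuous fun q : X₁ × ProbabilityMeasure X₂ => C q.1 q.2)
    (hCbdd : ∃ K : ℝ, ∀ x p, (K : EReal) ≤ C x p)
    (hCconv : ∀ (x : X₁) (p q m : ProbabilityMeasure X₂) (t : ℝ), 0 ≤ t → t ≤ 1 →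
      (m : Measure X₂) = ENNReal.ofReal t • (p : Measure X₂)
          + ENNReal.ofReal (1 - t) • (q : Measure X₂) →
      C x m ≤ (t : EReal) * C x p + ((1 - t : ℝ) : EReal) * C x q)
    (F₁ F₂ : EntropyFn)
    (hcoer : (0 : EReal) < ((F₁.recC : ℝ≥0∞) : EReal) + ((F₂.recC : ℝ≥0∞) : EReal)
        + sInf { e : EReal | ∃ (x : X₁) (p : ProbabilityMeasure X₂), e = C x p })
    (μ₁ : Measure X₁) (μ₂ : Measure X₂) [IsFiniteMeasure μ₁] [IsFiniteMeasure μ₂]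
    (hfeas : ∃ (γ : Measure (X₁ × X₂)) (hγ : IsFiniteMeasure γ),
      wCost C F₁ F₂ μ₁ μ₂ γ hγ < ⊤) :
    wOpt C F₁ F₂ μ₁ μ₂
      = sSup { e : EReal | ∃ φ ∈ lamSet C F₁ F₂,
          e = eIntegral μ₁ (fun x => F₁.circ (φ.1 x)) +
              eIntegral μ₂ (fun x => F₂.circ (φ.2 x)) } :=
  stmt1_general C hClsc hCconv F₁ F₂ hcoer μ₁ μ₂
end
end

section
/- Let X₁, X₂ be Polish metric spaces. If a set Q ⊂ 𝒫(X₁×X₂) is relatively compact in the weak* topology, then J(Q) ⊂ 𝒫(X₁ × 𝒫(X₂)) is relatively compact in the weak* topology, where J(γ) := (T_γ)_# γ₁ with T_γ : X₁ → X₁ × 𝒫(X₂), x₁ ↦ (x₁, γ_{x₁}). -/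
open MeasureTheory Filter Set Topology
open scoped ENNReal NNReal BoundedContinuousFunction

noncomputable section

/-
A measure `Λ` on `𝒫(Y)` has an intensity `∫ p dΛ(p)` on `Y`, and tightness passes from intensities
back to the measures. If the intensity of `Λ` gives `Kₙᶜ` mass at most `uₙ δₙ`, where `uₙ → 0` and
`∑ δₙ ≤ ε`, then by Markov's inequality `Λ` gives mass at most `ε` to the complement of
`{p | ∀ n, p(Kₙᶜ) ≤ uₙ}`, and this set is compact by Prokhorov's theorem. The first marginal of
`J(γ)` is `γ₁` and the intensity of its second marginal is `γ₂`, so `J(Q)` is tight along with `Q`,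
and Prokhorov's theorem translates between tightness and relative compactness.
-/

section Intensity

variable {Y : Type*} [MeasurableSpace Y] [TopologicalSpace Y] [HasOuterApproxClosed Y]

theorem lowerSemicontinuous_probabilityMeasure_apply_of_isOpen [OpensMeasurableSpace Y]
    {U : Set Y} (hU : IsOpen U) :
    LowerSemicontinuous fun p : ProbabilityMeasure Y => (p : Measure Y) U :=
  lowerSemicontinuous_iff_le_liminf.2 fun _ =>
    ProbabilityMeasure.le_liminf_measure_open_of_tendsto tendsto_id hU

variable [BorelSpace Y] [MeasurableSpace (ProbabilityMeasure Y)]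

/-- The intensity measure `s ↦ ∫ p(s) dΛ(p)` of a measure `Λ` on `𝒫(Y)`. The σ-algebra on `𝒫(Y)`
is a parameter that overrides the Giry instance, so that it can be the Borel one. -/
def intensity (Λ : Measure (ProbabilityMeasure Y)) : Measure Y :=
  Λ.bind ProbabilityMeasure.toMeasure

variable [OpensMeasurableSpace (ProbabilityMeasure Y)]

theorem measurable_probabilityMeasure_toMeasure :
    Measurable (ProbabilityMeasure.toMeasure : ProbabilityMeasure Y → Measure Y) :=
  .measure_of_isPiSystem_of_isProbabilityMeasure BorelSpace.measurable_eq isPiSystem_isOpen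
    fun _ hU => (lowerSemicontinuous_probabilityMeasure_apply_of_isOpen hU).measurable

theorem measurable_probabilityMeasure_apply {s : Set Y} (hs : MeasurableSet s) :
    Measurable fun p : ProbabilityMeasure Y => (p : Measure Y) s :=
  (Measure.measurable_coe hs).comp measurable_probabilityMeasure_toMeasure

theorem intensity_apply (Λ : Measure (ProbabilityMeasure Y)) {s : Set Y} (hs : MeasurableSet s) :
    intensity Λ s = ∫⁻ p, (p : Measure Y) s ∂Λ :=
  Measure.bind_apply hs measurable_probabilityMeasure_toMeasure.aemeasurable

theorem mul_measure_setOf_le_apply_le_intensity (Λ : Measure (ProbabilityMeasure Y)) {s : Set Y}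
    (hs : MeasurableSet s) (u : ℝ≥0∞) :
    u * Λ {p | u ≤ (p : Measure Y) s} ≤ intensity Λ s := by
  rw [intensity_apply Λ hs]
  exact mul_meas_ge_le_lintegral (measurable_probabilityMeasure_apply hs) u

theorem measure_compl_setOf_forall_apply_le_le_tsum {Λ : Measure (ProbabilityMeasure Y)}
    {s : ℕ → Set Y} (hs : ∀ n, MeasurableSet (s n)) {u : ℕ → ℝ≥0} (hu : ∀ n, 0 < u n)
    {δ : ℕ → ℝ≥0∞} (hΛ : ∀ n, intensity Λ (s n) ≤ u n * δ n) :
    Λ {p | ∀ n, p (s n) ≤ u n}ᶜ ≤ ∑' n, δ n := by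
  have hcover : {p : ProbabilityMeasure Y | ∀ n, p (s n) ≤ u n}ᶜ ⊆
      ⋃ n, {p | (u n : ℝ≥0∞) ≤ (p : Measure Y) (s n)} := by
    intro p hp
    obtain ⟨n, hn⟩ : ∃ n, u n < p (s n) := by simpa using hp
    refine mem_iUnion.2 ⟨n, ?_⟩
    rw [mem_ofPred_eq, ← ProbabilityMeasure.ennreal_coeFn_eq_coeFn_toMeasure]
    exact_mod_cast hn.le
  have hmarkov (n : ℕ) : Λ {p | (u n : ℝ≥0∞) ≤ (p : Measure Y) (s n)} ≤ δ n :=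
    (ENNReal.mul_le_mul_iff_right (by exact_mod_cast (hu n).ne') ENNReal.coe_ne_top).1
      ((mul_measure_setOf_le_apply_le_intensity Λ (hs n) (u n)).trans (hΛ n))
  calc Λ {p | ∀ n, p (s n) ≤ u n}ᶜ
      ≤ ∑' n, Λ {p | (u n : ℝ≥0∞) ≤ (p : Measure Y) (s n)} :=
        (measure_mono hcover).trans (measure_iUnion_le _)
    _ ≤ ∑' n, δ n := ENNReal.tsum_le_tsum hmarkov

theorem isTightMeasureSet_of_isTightMeasureSet_intensity [T4Space Y]
    {S : Set (Measure (ProbabilityMeasure Y))} (hS : IsTightMeasureSet (intensity '' S)) :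
    IsTightMeasureSet S := by
  rw [isTightMeasureSet_iff_exists_isCompact_measure_compl_le] at hS ⊢
  intro ε hε
  obtain ⟨δ, hδ, hδε⟩ := ENNReal.exists_pos_sum_of_countable' hε.ne' ℕ
  obtain ⟨u, -, hu, hu_tendsto⟩ := exists_seq_strictAnti_tendsto (0 : ℝ≥0)
  have hK (n : ℕ) : ∃ K : Set Y, IsCompact K ∧ ∀ ν ∈ intensity '' S, ν Kᶜ ≤ u n * δ n :=
    hS _ (ENNReal.mul_pos (by exact_mod_cast (hu n).ne') (hδ n).ne')
  choose K hK_compact hK_le using hK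
  refine ⟨{p | ∀ n, p (K n)ᶜ ≤ u n},
    isCompact_setOfPred_probabilityMeasure_mass_eq_compl_isCompact_le hu_tendsto hK_compact
      (.inl inferInstance), fun Λ hΛ => ?_⟩
  exact (measure_compl_setOf_forall_apply_le_le_tsum (fun n => (hK_compact n).measurableSet.compl)
    hu fun n => hK_le n _ (mem_image_of_mem _ hΛ)).trans hδε.le

end Intensity

section KernelGraph

open ProbabilityTheory

variable {X Y : Type*} [MeasurableSpace X] [MeasurableSpace Y]

/-- The graph `x ↦ (x, κ x)` of a Markov kernel `κ`, seen as a map into `X × 𝒫(Y)`; for the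
conditional kernel of a measure `γ` on `X × Y` it is the map `T_γ`. -/
def kernelGraph (κ : Kernel X Y) [IsMarkovKernel κ] (x : X) : X × ProbabilityMeasure Y :=
  (x, ⟨κ x, inferInstance⟩)

theorem fst_bind_condKernel [StandardBorelSpace Y] [Nonempty Y] (γ : Measure (X × Y))
    [IsFiniteMeasure γ] : γ.fst.bind γ.condKernel = γ.snd := by
  rw [← Measure.snd_compProd, γ.disintegrate]

variable [MeasurableSpace (ProbabilityMeasure Y)]

theorem fst_map_kernelGraph {μ : Measure X} {κ : Kernel X Y} [IsMarkovKernel κ]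
    (hκ : AEMeasurable (kernelGraph κ) μ) : (μ.map (kernelGraph κ)).fst = μ := by
  rw [Measure.fst, AEMeasurable.map_map_of_aemeasurable measurable_fst.aemeasurable hκ]
  exact Measure.map_id

theorem intensity_snd_map_kernelGraph [TopologicalSpace Y] [BorelSpace Y] [HasOuterApproxClosed Y]
    [OpensMeasurableSpace (ProbabilityMeasure Y)] {μ : Measure X} {κ : Kernel X Y}
    [IsMarkovKernel κ] (hκ : AEMeasurable (kernelGraph κ) μ) :
    intensity (μ.map (kernelGraph κ)).snd = μ.bind κ := by
  ext s hs
  have hs_apply := measurable_probabilityMeasure_apply hs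
  calc intensity (μ.map (kernelGraph κ)).snd s
      = ∫⁻ p, (p : Measure Y) s ∂(μ.map (kernelGraph κ)).snd := intensity_apply _ hs
    _ = ∫⁻ q, (q.2 : Measure Y) s ∂μ.map (kernelGraph κ) := lintegral_map hs_apply measurable_snd
    _ = ∫⁻ x, κ x s ∂μ := lintegral_map' (hs_apply.comp measurable_snd).aemeasurable hκ
    _ = μ.bind κ s := (Measure.bind_apply hs κ.aemeasurable).symm

end KernelGraph

section DisintegrationLift

variable {X Y : Type*} [MeasurableSpace X] [MeasurableSpace Y] [StandardBorelSpace Y] [Nonempty Y]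
  [MeasurableSpace (ProbabilityMeasure Y)]

/-- The set `J(Q)` of the laws `J(γ) = (T_γ)_# γ₁` with `γ ∈ Q`. A `γ` for which `T_γ` fails to be
a.e. measurable contributes nothing: `Measure.map` is then `0`, which is no probability measure. -/
def disintegrationLift (Q : Set (ProbabilityMeasure (X × Y))) :
    Set (ProbabilityMeasure (X × ProbabilityMeasure Y)) :=
  {P | ∃ γ ∈ Q, (P : Measure (X × ProbabilityMeasure Y)) =
    (γ : Measure (X × Y)).fst.map (kernelGraph (γ : Measure (X × Y)).condKernel)}

variable [TopologicalSpace Y] [BorelSpace Y] [HasOuterApproxClosed Y]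
  [OpensMeasurableSpace (ProbabilityMeasure Y)] {Q : Set (ProbabilityMeasure (X × Y))}

theorem exists_fst_eq_and_intensity_snd_eq_of_mem_disintegrationLift
    {P : ProbabilityMeasure (X × ProbabilityMeasure Y)} (hP : P ∈ disintegrationLift Q) :
    ∃ γ ∈ Q, (γ : Measure (X × Y)).fst = (P : Measure (X × ProbabilityMeasure Y)).fst ∧
      (γ : Measure (X × Y)).snd = intensity (P : Measure (X × ProbabilityMeasure Y)).snd := by
  obtain ⟨γ, hγ, hPγ⟩ := hP
  have h_graph : AEMeasurable (kernelGraph (γ : Measure (X × Y)).condKernel)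
      (γ : Measure (X × Y)).fst :=
    .of_map_ne_zero (hPγ ▸ IsProbabilityMeasure.ne_zero _)
  refine ⟨γ, hγ, ?_, ?_⟩
  · rw [hPγ, fst_map_kernelGraph h_graph]
  · rw [hPγ, intensity_snd_map_kernelGraph h_graph, fst_bind_condKernel]

theorem isTightMeasureSet_disintegrationLift [TopologicalSpace X] [T2Space X]
    [OpensMeasurableSpace X] [T4Space Y]
    (hQ : IsTightMeasureSet {(γ : Measure (X × Y)) | γ ∈ Q}) :
    IsTightMeasureSet {(P : Measure (X × ProbabilityMeasure Y)) | P ∈ disintegrationLift Q} := by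
  refine .prodMk ((hQ.map continuous_fst).subset ?_)
    (isTightMeasureSet_of_isTightMeasureSet_intensity ((hQ.map continuous_snd).subset ?_))
  · rintro _ ⟨_, ⟨P, hP, rfl⟩, rfl⟩
    obtain ⟨γ, hγ, h_fst, -⟩ := exists_fst_eq_and_intensity_snd_eq_of_mem_disintegrationLift hP
    exact ⟨γ, ⟨γ, hγ, rfl⟩, h_fst⟩
  · rintro _ ⟨_, ⟨_, ⟨P, hP, rfl⟩, rfl⟩, rfl⟩
    obtain ⟨γ, hγ, -, h_snd⟩ := exists_fst_eq_and_intensity_snd_eq_of_mem_disintegrationLift hP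
    exact ⟨γ, ⟨γ, hγ, rfl⟩, h_snd⟩

end DisintegrationLift

theorem isTightMeasureSet_of_isCompact_closure_of_polishSpace {X : Type*} [TopologicalSpace X]
    [PolishSpace X] [MeasurableSpace X] [BorelSpace X] {Q : Set (ProbabilityMeasure X)}
    (hQ : IsCompact (closure Q)) : IsTightMeasureSet {(μ : Measure X) | μ ∈ Q} := by
  let := TopologicalSpace.upgradeIsCompletelyMetrizable X
  exact isTightMeasureSet_of_isCompact_closure hQ

theorem stmt4
    {X₁ : Type*} [MetricSpace X₁] [PolishSpace X₁] [MeasurableSpace X₁] [BorelSpace X₁]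
    {X₂ : Type*} [MetricSpace X₂] [PolishSpace X₂] [MeasurableSpace X₂] [BorelSpace X₂]
    [Nonempty X₂] :
    letI : MeasurableSpace (ProbabilityMeasure X₂) := borel (ProbabilityMeasure X₂)
    haveI : BorelSpace (ProbabilityMeasure X₂) := ⟨rfl⟩
    ∀ Q : Set (ProbabilityMeasure (X₁ × X₂)), IsCompact (closure Q) →
      IsCompact (closure { P : ProbabilityMeasure (X₁ × ProbabilityMeasure X₂) |
        ∃ γ ∈ Q, (P : Measure (X₁ × ProbabilityMeasure X₂)) =
          Measure.map (fun x₁ => ((x₁,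
              ⟨(γ : Measure (X₁ × X₂)).condKernel x₁, inferInstance⟩) :
                X₁ × ProbabilityMeasure X₂))
            ((γ : Measure (X₁ × X₂)).fst) }) := by
  intro Q hQ
  let : MeasurableSpace (ProbabilityMeasure X₂) := borel (ProbabilityMeasure X₂)
  have : BorelSpace (ProbabilityMeasure X₂) := ⟨rfl⟩
  have hQ_tight : IsTightMeasureSet {(γ : Measure (X₁ × X₂)) | γ ∈ Q} :=
    isTightMeasureSet_of_isCompact_closure_of_polishSpace hQ
  exact isCompact_closure_of_isTightMeasureSet (isTightMeasureSet_disintegrationLift hQ_tight)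
end
end
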